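/- arXiv:2009.06917 — 12 statements merged into one kernel-verified Lean document; each statement's English description precedes it below -/
import Mathlib

section
/- Let A ⊆ M×M satisfy (A1), (A2) and (A3). Then the set Im := {Z ∈ M : ∃(J,D) ∈ A with Z = J + D} is a nonempty closed subset of M. -/
/-! Addition `(J, D) ↦ J + D` is expansive on a monotone set: the cross term in
`‖ΔJ + ΔD‖² = ‖ΔJ‖² + 2 ⟪ΔJ, ΔD⟫ + ‖ΔD‖²` is nonnegative, so both `‖ΔJ‖` and `‖ΔD‖` are at most
`‖ΔJ + ΔD‖`. By maximality a maximal monotone set is an intersection of closed conditions, hence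
closed and therefore complete. The image of a complete space under a uniformly continuous
antilipschitz map is closed. -/

open scoped RealInnerProductSpace

/-- The space of real N×d matrices with the Frobenius inner product,
modelled as a Euclidean space. -/
abbrev Mat (N d : ℕ) := EuclideanSpace ℝ (Fin N × Fin d)

theorem norm_le_norm_add_of_inner_nonneg {E : Type*} [NormedAddCommGroup E]
    [InnerProductSpace ℝ E] {x y : E} (h : 0 ≤ ⟪x, y⟫) : ‖x‖ ≤ ‖x + y‖ := by
  refine le_of_sq_le_sq ?_ (norm_nonneg _)
  rw [norm_add_sq_real]
  nlinarith [sq_nonneg ‖y‖]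

theorem antilipschitz_add_of_monotone {E : Type*} [NormedAddCommGroup E]
    [InnerProductSpace ℝ E] {A : Set (E × E)}
    (hA : ∀ q₁ ∈ A, ∀ q₂ ∈ A, 0 ≤ ⟪q₁.1 - q₂.1, q₁.2 - q₂.2⟫) :
    AntilipschitzWith 1 (fun q : A => q.1.1 + q.1.2) := by
  refine AntilipschitzWith.of_le_mul_dist fun p q => ?_
  have h := hA p.1 p.2 q.1 q.2
  have h' : 0 ≤ ⟪p.1.2 - q.1.2, p.1.1 - q.1.1⟫ := by rwa [real_inner_comm]
  have e : p.1.1 + p.1.2 - (q.1.1 + q.1.2) = (p.1.1 - q.1.1) + (p.1.2 - q.1.2) := by abel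
  rw [NNReal.coe_one, one_mul, Subtype.dist_eq, Prod.dist_eq, dist_eq_norm, dist_eq_norm,
    dist_eq_norm, e]
  refine max_le (norm_le_norm_add_of_inner_nonneg h) ?_
  rw [add_comm]
  exact norm_le_norm_add_of_inner_nonneg h'

theorem isClosed_of_maximal_monotone {E : Type*} [NormedAddCommGroup E]
    [InnerProductSpace ℝ E] {A : Set (E × E)}
    (hA2 : ∀ q₁ ∈ A, ∀ q₂ ∈ A, 0 ≤ ⟪q₁.1 - q₂.1, q₁.2 - q₂.2⟫)
    (hA3 : ∀ q : E × E, (∀ q' ∈ A, 0 ≤ ⟪q.1 - q'.1, q.2 - q'.2⟫) → q ∈ A) :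
    IsClosed A := by
  have e : A = ⋂ q' ∈ A, {q : E × E | 0 ≤ ⟪q.1 - q'.1, q.2 - q'.2⟫} := by
    ext q
    simp only [Set.mem_iInter, Set.mem_ofPred_eq]
    exact ⟨fun h q' h' => hA2 q h q' h', hA3 q⟩
  rw [e]
  exact isClosed_biInter fun q' _ => isClosed_le continuous_const (by fun_prop)

/-- Let A ⊆ M×M satisfy (A1), (A2) and (A3). Then the set
Im := {Z ∈ M : ∃(J,D) ∈ A with Z = J + D} is a nonempty closed subset of M. -/
theorem im_nonempty_and_closed {N d : ℕ} (hN : 1 ≤ N) (hd : 1 ≤ d)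
    (A : Set (Mat N d × Mat N d))
    (hA1 : ((0 : Mat N d), (0 : Mat N d)) ∈ A)
    (hA2 : ∀ q₁ ∈ A, ∀ q₂ ∈ A, 0 ≤ ⟪q₁.1 - q₂.1, q₁.2 - q₂.2⟫)
    (hA3 : ∀ q : Mat N d × Mat N d, (∀ q' ∈ A, 0 ≤ ⟪q.1 - q'.1, q.2 - q'.2⟫) → q ∈ A) :
    ({Z : Mat N d | ∃ J D : Mat N d, (J, D) ∈ A ∧ Z = J + D}).Nonempty ∧
    IsClosed {Z : Mat N d | ∃ J D : Mat N d, (J, D) ∈ A ∧ Z = J + D} := by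
  refine ⟨⟨0, 0, 0, hA1, by simp⟩, ?_⟩
  have : CompleteSpace A := (isClosed_of_maximal_monotone hA2 hA3).completeSpace_coe
  have hu : UniformContinuous (fun q : A => q.1.1 + q.1.2) :=
    (uniformContinuous_fst.comp uniformContinuous_subtype_val).add
      (uniformContinuous_snd.comp uniformContinuous_subtype_val)
  have e : {Z : Mat N d | ∃ J D : Mat N d, (J, D) ∈ A ∧ Z = J + D} =
      Set.range (fun q : A => q.1.1 + q.1.2) := by
    ext Z
    constructor
    · rintro ⟨J, D, h, rfl⟩
      exact ⟨⟨(J, D), h⟩, rfl⟩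
    · rintro ⟨⟨⟨J, D⟩, h⟩, rfl⟩
      exact ⟨J, D, h, rfl⟩
  rw [e]
  exact (antilipschitz_add_of_monotone hA2).isClosed_range hu
end

section
/- Let G : M×M → M satisfy (G1) and (G2), and assume that for every J ∈ M one has limsup_{|D|→∞} G(J,D):D < 0. Then for every ε ∈ (0,1] and every Z ∈ M there exists D ∈ M such that G(Z − εD, D) = 0. -/
/-!
Fix `ε > 0` and `Z`, and put `F D = G (Z - ε • D, D)`. The Lipschitz function
`G` is absolutely continuous along lines, and almost every line in a given direction meets the
exceptional set of the hypothesis on the partial derivatives in a null set. The sign conditions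
therefore integrate to `G` being a monotone map in `J` and an antitone one in `D`
(`le_add_of_ae_deriv_nonneg`); hence `-F` is a monotone Lipschitz map. Monotonicity in `J` also
gives `F D : D ≤ G (Z, D) : D`, which is negative for large `D`.

For such a map no degree theory is needed to find a zero (`exists_zero_of_antitone`): for `δ > 0`
the map `δ • id - F` is strongly monotone and Lipschitz, so `x ↦ x - r • (δ • x - F x)` is a
contraction for small `r`, and there is `x` with `F x = δ • x`
(`exists_eq_smul_of_antitone`). Then `⟪F x, x⟫ ≥ 0` confines `x` to a fixed ball, on which `‖F‖`
therefore takes arbitrarily small values, and by compactness the value `0`.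
-/

open scoped RealInnerProductSpace
open MeasureTheory Filter

/-- A Lipschitz function whose derivative in the direction `v` is nonnegative almost everywhere
(where `deriv` takes the value `0` if the derivative fails to exist) does not decrease
along `v`. By Fubini almost every line in the direction `v` meets the exceptional set in a null
set; continuity then extends the inequality to all base points. -/
lemma le_add_of_ae_deriv_nonneg {E : Type*} [NormedAddCommGroup E] [NormedSpace ℝ E]
    [FiniteDimensional ℝ E] [MeasurableSpace E] [BorelSpace E] (μ : Measure E)
    [Measure.IsAddHaarMeasure μ] {H : E → ℝ} {K : NNReal} (hH : LipschitzWith K H) (v : E)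
    (h : ∀ᵐ q ∂μ, 0 ≤ deriv (fun t : ℝ => H (q + t • v)) 0) (q : E) : H q ≤ H (q + v) := by
  obtain ⟨S, hSsub, hSm, hS0⟩ := exists_measurable_superset_of_null (ae_iff.1 h)
  have hmeas : Measurable (fun p : ℝ × E => p.2 + p.1 • v) :=
    (by fun_prop : Continuous (fun p : ℝ × E => p.2 + p.1 • v)).measurable
  have h1 : ∀ᵐ t : ℝ, ∀ᵐ x ∂μ, x + t • v ∈ Sᶜ := by
    refine Eventually.of_forall fun t => ?_
    exact (measurePreserving_add_right μ (t • v)).quasiMeasurePreserving.ae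
      (measure_eq_zero_iff_ae_notMem.1 hS0)
  have h2 : ∀ᵐ x ∂μ, ∀ᵐ t : ℝ, x + t • v ∈ Sᶜ :=
    (Measure.ae_ae_comm (p := fun (t : ℝ) x => x + t • v ∈ Sᶜ) (hmeas hSm.compl)).1 h1
  have h3 : ∀ᵐ x ∂μ, H x ≤ H (x + v) := by
    filter_upwards [h2] with x hx
    have hline : LipschitzWith (‖v‖₊) (fun t : ℝ => x + t • v) := by
      refine LipschitzWith.of_dist_le_mul fun s t => ?_
      rw [dist_add_left, dist_eq_norm, ← sub_smul, norm_smul, dist_eq_norm, mul_comm]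
      rfl
    have hg := hH.comp hline
    have hac : AbsolutelyContinuousOnInterval (H ∘ fun t : ℝ => x + t • v) 0 1 :=
      (hg.lipschitzOnWith (s := Set.uIcc 0 1)).absolutelyContinuousOnInterval
    have hftc := hac.integral_deriv_eq_sub
    have hnn : 0 ≤ ∫ t in (0 : ℝ)..1, deriv (H ∘ fun t : ℝ => x + t • v) t := by
      refine intervalIntegral.integral_nonneg_of_ae zero_le_one ?_
      filter_upwards [hx] with t ht
      have h0 : 0 ≤ deriv (fun s : ℝ => H (x + t • v + s • v)) 0 := by
        by_contra hcon
        exact ht (hSsub hcon)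
      have heq : (fun s : ℝ => H (x + t • v + s • v)) =
          fun s => (H ∘ fun t : ℝ => x + t • v) (t + s) := by
        funext s
        simp [add_smul, add_assoc]
      rw [heq, deriv_comp_const_add, add_zero] at h0
      exact h0
    rw [hftc] at hnn
    simpa using hnn
  have hc : IsClosed {x | H x ≤ H (x + v)} :=
    isClosed_le hH.continuous (hH.continuous.comp (by fun_prop))
  have hd := Measure.dense_of_ae h3
  have := hc.closure_eq ▸ hd q
  exact this

/-- The resolvent equation of a monotone Lipschitz map `-F`. -/
lemma exists_eq_smul_of_antitone {E : Type*} [NormedAddCommGroup E] [InnerProductSpace ℝ E]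
    [CompleteSpace E] {F : E → E} {K : NNReal} (hF : LipschitzWith K F)
    (hmono : ∀ x y, ⟪F x - F y, x - y⟫ ≤ 0) {δ : ℝ} (hδ : 0 < δ) : ∃ x, F x = δ • x := by
  -- The `+ 1` only ensures `δ < L`, so that the contraction constant below is nonnegative.
  set L : ℝ := K + δ + 1 with hL
  have hK : (0 : ℝ) ≤ K := K.2
  have hL0 : 0 < L := by positivity
  -- The step `r = δ / L ^ 2` minimizes `1 - 2 * r * δ + r ^ 2 * L ^ 2`.
  set r : ℝ := δ / L ^ 2 with hr
  have hr0 : 0 < r := by positivity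
  set k : ℝ := 1 - δ ^ 2 / L ^ 2 with hk
  have hk1 : k < 1 := by
    have : 0 < δ ^ 2 / L ^ 2 := by positivity
    linarith
  have hk0 : 0 ≤ k := by
    have : δ ^ 2 / L ^ 2 ≤ 1 := by
      rw [div_le_one (by positivity)]
      gcongr
      linarith
    linarith
  have hcontr : ContractingWith (Real.sqrt k).toNNReal (fun x => x - r • (δ • x - F x)) := by
    refine ⟨?_, LipschitzWith.of_dist_le_mul fun x y => ?_⟩
    · rw [Real.toNNReal_lt_one, Real.sqrt_lt' one_pos]
      simpa using hk1
    · rw [Real.coe_toNNReal _ (Real.sqrt_nonneg _), dist_eq_norm, dist_eq_norm]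
      set A : E := δ • (x - y) - (F x - F y) with hA
      have hsub : x - r • (δ • x - F x) - (y - r • (δ • y - F y)) = (x - y) - r • A := by
        rw [hA]; module
      have hAn : ‖A‖ ≤ L * ‖x - y‖ := by
        calc ‖A‖ ≤ ‖δ • (x - y)‖ + ‖F x - F y‖ := norm_sub_le _ _
          _ ≤ δ * ‖x - y‖ + K * ‖x - y‖ := by
            gcongr
            · rw [norm_smul, Real.norm_of_nonneg hδ.le]
            · exact hF.norm_sub_le x y
          _ ≤ L * ‖x - y‖ := by rw [hL]; nlinarith [norm_nonneg (x - y)]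
      have hAi : δ * ‖x - y‖ ^ 2 ≤ ⟪x - y, A⟫ := by
        have := hmono x y
        rw [real_inner_comm] at this
        rw [hA, inner_sub_right, inner_smul_right, real_inner_self_eq_norm_sq]
        linarith
      have hsq : ‖(x - y) - r • A‖ ^ 2 ≤ k * ‖x - y‖ ^ 2 := by
        rw [norm_sub_sq_real, inner_smul_right, norm_smul, Real.norm_of_nonneg hr0.le, mul_pow]
        have e1 : ‖A‖ ^ 2 ≤ L ^ 2 * ‖x - y‖ ^ 2 := by
          rw [← mul_pow]; gcongr
        have e2 := mul_le_mul_of_nonneg_left hAi hr0.le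
        have e3 := mul_le_mul_of_nonneg_left e1 (sq_nonneg r)
        have e4 : k = 1 - 2 * (r * δ) + r ^ 2 * L ^ 2 := by
          rw [hk, hr]; field_simp; ring
        rw [e4]
        nlinarith
      rw [hsub]
      calc ‖(x - y) - r • A‖ = Real.sqrt (‖(x - y) - r • A‖ ^ 2) :=
            (Real.sqrt_sq (norm_nonneg _)).symm
        _ ≤ Real.sqrt (k * ‖x - y‖ ^ 2) := Real.sqrt_le_sqrt hsq
        _ = Real.sqrt k * ‖x - y‖ := by rw [Real.sqrt_mul hk0, Real.sqrt_sq (norm_nonneg _)]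
  refine ⟨ContractingWith.fixedPoint _ hcontr, ?_⟩
  have hfix := hcontr.fixedPoint_isFixedPt
  have h0 : r • (δ • ContractingWith.fixedPoint _ hcontr -
      F (ContractingWith.fixedPoint _ hcontr)) = 0 := sub_eq_self.1 hfix
  have h1 := (smul_eq_zero.1 h0).resolve_left hr0.ne'
  exact (sub_eq_zero.1 h1).symm

/-- A monotone Lipschitz map `-F` with `⟪F x, x⟫ < 0` far from the origin has a zero. -/
lemma exists_zero_of_antitone {E : Type*} [NormedAddCommGroup E] [InnerProductSpace ℝ E]
    [FiniteDimensional ℝ E] {F : E → E} {K : NNReal} (hF : LipschitzWith K F)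
    (hmono : ∀ x y, ⟪F x - F y, x - y⟫ ≤ 0) {R : ℝ} (hR : ∀ x, R ≤ ‖x‖ → ⟪F x, x⟫ < 0) :
    ∃ x, F x = 0 := by
  have : ProperSpace E := FiniteDimensional.proper ℝ E
  have : CompleteSpace E := FiniteDimensional.complete ℝ E
  have hres : ∀ δ : ℝ, 0 < δ → ∃ x, ‖x‖ ≤ R ∧ F x = δ • x := by
    intro δ hδ
    obtain ⟨x, hx⟩ := exists_eq_smul_of_antitone hF hmono hδ
    refine ⟨x, ?_, hx⟩
    by_contra! hlt
    have h := hR x hlt.le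
    rw [hx, inner_smul_left, real_inner_self_eq_norm_sq] at h
    have : 0 ≤ δ * ‖x‖ ^ 2 := by positivity
    exact absurd h (not_lt.2 this)
  obtain ⟨x₁, hx₁, -⟩ := hres 1 one_pos
  have hR0 : 0 ≤ R := (norm_nonneg _).trans hx₁
  obtain ⟨x, -, hmin⟩ := (isCompact_closedBall (0 : E) R).exists_isMinOn
    ⟨x₁, by simpa using hx₁⟩ hF.continuous.norm.continuousOn
  refine ⟨x, norm_le_zero_iff.1 (le_of_forall_pos_le_add fun η hη => ?_)⟩
  -- With this `δ` one gets `‖F y‖ = δ * ‖y‖ ≤ δ * R < η`.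
  obtain ⟨y, hyR, hy⟩ := hres (η / (R + 1)) (by positivity)
  have hle : ‖F x‖ ≤ ‖F y‖ := hmin (by simpa using hyR)
  rw [hy, norm_smul, Real.norm_of_nonneg (by positivity)] at hle
  have : η / (R + 1) * ‖y‖ ≤ η / (R + 1) * (R + 1) := by
    gcongr
    linarith
  rw [div_mul_cancel₀ _ (by positivity)] at this
  linarith




/-- Let G : M×M → M satisfy (G1) and (G2), and assume that for every
J ∈ M one has limsup_{|D|→∞} G(J,D):D < 0. Then for every ε ∈ (0,1] and every Z ∈ M
there exists D ∈ M such that G(Z − εD, D) = 0. -/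
theorem exists_null_point_shifted {N d : ℕ} (hN : 1 ≤ N) (hd : 1 ≤ d)
    (G : Mat N d × Mat N d → Mat N d)
    -- (G1): G is Lipschitz continuous and G(0,0) = 0
    (hG1 : (∃ K : NNReal, LipschitzWith K G) ∧ G (0, 0) = 0)
    -- (G2): for a.e. (J,D), the partial Fréchet derivatives exist and satisfy
    -- G_J ≥ 0, G_D ≤ 0, G_J − G_D > 0 and G_D (G_J)ᵀ ≤ 0
    (hG2 : ∀ᵐ q : Mat N d × Mat N d ∂volume, ∃ GJ GD : Mat N d →L[ℝ] Mat N d,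
      HasFDerivAt (fun J => G (J, q.2)) GJ q.1 ∧
      HasFDerivAt (fun D' => G (q.1, D')) GD q.2 ∧
      (∀ X, 0 ≤ ⟪GJ X, X⟫) ∧
      (∀ X, ⟪GD X, X⟫ ≤ 0) ∧
      (∀ X, X ≠ 0 → 0 < ⟪GJ X - GD X, X⟫) ∧
      (∀ X, ⟪GD (ContinuousLinearMap.adjoint GJ X), X⟫ ≤ 0))
    -- second alternative of (G3): limsup_{|D|→∞} G(J,D):D < 0 for every J
    (hG3b : ∀ J : Mat N d,
      limsup (fun D' => (⟪G (J, D'), D'⟫ : EReal))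
        (comap (fun D' : Mat N d => ‖D'‖) atTop) < 0) :
    ∀ ε ∈ Set.Ioc (0 : ℝ) 1, ∀ Z : Mat N d, ∃ D' : Mat N d, G (Z - ε • D', D') = 0 := by
  intro ε hε Z
  obtain ⟨⟨K, hK⟩, -⟩ := hG1
  have : (volume : Measure (Mat N d × Mat N d)).IsAddHaarMeasure :=
    Measure.prod.instIsAddHaarMeasure (volume : Measure (Mat N d)) (volume : Measure (Mat N d))
  have hinner : ∀ w : Mat N d, LipschitzWith (‖w‖₊ * K) (fun q => ⟪G q, w⟫) := by
    intro w
    refine LipschitzWith.of_dist_le_mul fun p q => ?_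
    rw [Real.dist_eq, ← inner_sub_left]
    calc |⟪G p - G q, w⟫| ≤ ‖G p - G q‖ * ‖w‖ := abs_real_inner_le_norm _ _
      _ ≤ (K * dist p q) * ‖w‖ := by
        gcongr
        rw [← dist_eq_norm]
        exact hK.dist_le_mul p q
      _ = ↑(‖w‖₊ * K) * dist p q := by push_cast; ring
  have hJ : ∀ J h D : Mat N d, 0 ≤ ⟪G (J + h, D) - G (J, D), h⟫ := by
    intro J h D
    have := le_add_of_ae_deriv_nonneg volume (hinner h) ((h, 0) : Mat N d × Mat N d) (by
      filter_upwards [hG2] with q hq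
      obtain ⟨GJ, GD, h1, -, h3, -⟩ := hq
      have hl : HasDerivAt (fun t : ℝ => q.1 + t • h) h 0 := by
        simpa using ((hasDerivAt_id (0 : ℝ)).smul_const h).const_add q.1
      have hc : HasDerivAt (fun t : ℝ => G (q.1 + t • h, q.2)) (GJ h) 0 :=
        HasFDerivAt.comp_hasDerivAt (0 : ℝ) (l := fun J => G (J, q.2)) (by simpa using h1) hl
      have hi := hc.inner ℝ (hasDerivAt_const (0 : ℝ) h)
      have he : (fun t : ℝ => ⟪G (q + t • ((h, 0) : Mat N d × Mat N d)), h⟫) =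
          fun t : ℝ => ⟪G (q.1 + t • h, q.2), h⟫ := by
        funext t
        congr 2
        ext <;> simp
      rw [he, hi.deriv]
      simpa using h3 h) (J, D)
    rw [inner_sub_left]
    simpa using this
  have hD : ∀ J h D : Mat N d, ⟪G (J, D + h) - G (J, D), h⟫ ≤ 0 := by
    intro J h D
    have := le_add_of_ae_deriv_nonneg volume (hinner (-h)) ((0, h) : Mat N d × Mat N d) (by
      filter_upwards [hG2] with q hq
      obtain ⟨GJ, GD, -, h2, -, h4, -⟩ := hq
      have hl : HasDerivAt (fun t : ℝ => q.2 + t • h) h 0 := by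
        simpa using ((hasDerivAt_id (0 : ℝ)).smul_const h).const_add q.2
      have hc : HasDerivAt (fun t : ℝ => G (q.1, q.2 + t • h)) (GD h) 0 :=
        HasFDerivAt.comp_hasDerivAt (0 : ℝ) (l := fun D' => G (q.1, D')) (by simpa using h2) hl
      have hi := hc.inner ℝ (hasDerivAt_const (0 : ℝ) (-h))
      have he : (fun t : ℝ => ⟪G (q + t • ((0, h) : Mat N d × Mat N d)), -h⟫) =
          fun t : ℝ => ⟪G (q.1, q.2 + t • h), -h⟫ := by
        funext t
        congr 2
        ext <;> simp
      rw [he, hi.deriv]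
      simpa using h4 h) (J, D)
    rw [inner_sub_left]
    simpa [inner_neg_right] using this
  obtain ⟨R, hR⟩ : ∃ R : ℝ, ∀ D', R ≤ ‖D'‖ → ⟪G (Z, D'), D'⟫ < 0 := by
    have h := eventually_lt_of_limsup_lt (hG3b Z)
    rw [eventually_comap, eventually_atTop] at h
    obtain ⟨R, hR⟩ := h
    exact ⟨R, fun D' hD' => by exact_mod_cast hR _ hD' D' rfl⟩
  -- Moving the first slot against `h` by `ε • h` can only decrease the component along `h`.
  have hJε : ∀ J h D : Mat N d, ⟪G (J - ε • h, D) - G (J, D), h⟫ ≤ 0 := by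
    intro J h D
    have h1 := hJ J (-(ε • h)) D
    rw [← sub_eq_add_neg, inner_neg_right, inner_smul_right] at h1
    have hε0 : 0 < ε := hε.1
    by_contra! hcon
    have := mul_pos hε0 hcon
    linarith
  have hpair : LipschitzWith (1 + ‖ε‖₊) (fun D' : Mat N d => (Z - ε • D', D')) := by
    refine LipschitzWith.of_dist_le_mul fun x y => ?_
    rw [Prod.dist_eq, dist_sub_left, dist_smul₀]
    have h0 : 0 ≤ ‖ε‖ * dist x y := by positivity
    have h1 : 0 ≤ dist x y := dist_nonneg
    push_cast
    exact max_le (by linarith) (by linarith)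
  refine exists_zero_of_antitone (hK.comp hpair) (fun x y => ?_) (R := R) (fun x hx => ?_)
  · have h1 := hJε (Z - ε • y) (x - y) x
    have h2 := hD (Z - ε • y) (x - y) y
    have e1 : Z - ε • y - ε • (x - y) = Z - ε • x := by module
    rw [e1] at h1
    rw [add_sub_cancel] at h2
    have e2 : G (Z - ε • x, x) - G (Z - ε • y, y) = (G (Z - ε • x, x) - G (Z - ε • y, x)) +
        (G (Z - ε • y, x) - G (Z - ε • y, y)) := by abel
    change ⟪G (Z - ε • x, x) - G (Z - ε • y, y), x - y⟫ ≤ 0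
    rw [e2, inner_add_left]
    linarith
  · have h1 := hJε Z x x
    have h2 := hR x hx
    rw [inner_sub_left] at h1
    change ⟪G (Z - ε • x, x), x⟫ < 0
    linarith
end

section
/- Let G : M×M → M and let (J,D) ∈ M×M with G(J,D) = 0. Assume G is Fréchet differentiable at (J,D) with partial derivatives G_J := G_J(J,D) and G_D := G_D(J,D), and assume there exist a neighborhood O of D in M and a map h : O → M, differentiable at D, such that h(D) = J, G(h(D'),D') = 0 for all D' ∈ O, and the derivative h'(D) is positive semidefinite (i.e., h'(D)X:X ≥ 0 for all X ∈ M, as is the case when the null set of G is a monotone graph). Then G_D (G_J)ᵀ ≤ 0, i.e., G_D(G_J)ᵀ X : X ≤ 0 for all X ∈ M. -/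
/-!
The map `D' ↦ G (h D', D')` vanishes near `D`, so its derivative at `D`, which by the chain rule is
`G_J ∘ h' + G_D`, is zero. With `Y = (G_J)ᵀ X` this gives
`⟪G_D Y, X⟫ = -⟪G_J (h' Y), X⟫ = -⟪h' Y, Y⟫ ≤ 0`.
-/

open scoped RealInnerProductSpace

/-- Let G : M×M → M and (J,D) with G(J,D) = 0. Assume G is Fréchet
differentiable at (J,D) (with derivative G', whose partial derivatives are
G_J = G' ∘ inl and G_D = G' ∘ inr), and assume there are a neighborhood O of D and a map
h : O → M, differentiable at D with positive semidefinite derivative h'(D), such that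
h(D) = J and G(h(D'),D') = 0 on O. Then G_D (G_J)ᵀ ≤ 0, i.e.
⟪G_D((G_J)ᵀ X), X⟫ ≤ 0 for all X. -/
theorem necessity_of_last_G2_inequality {N d : ℕ} (hN : 1 ≤ N) (hd : 1 ≤ d)
    (G : Mat N d × Mat N d → Mat N d) (J D : Mat N d)
    (hnull : G (J, D) = 0)
    (G' : Mat N d × Mat N d →L[ℝ] Mat N d)
    (hG' : HasFDerivAt G G' (J, D))
    (O : Set (Mat N d)) (hO : O ∈ nhds D)
    (h : Mat N d → Mat N d) (h' : Mat N d →L[ℝ] Mat N d)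
    (hh : HasFDerivAt h h' D)
    (hhD : h D = J)
    (hnullO : ∀ D' ∈ O, G (h D', D') = 0)
    (hpsd : ∀ X : Mat N d, 0 ≤ ⟪h' X, X⟫) :
    ∀ X : Mat N d,
      ⟪(G'.comp (ContinuousLinearMap.inr ℝ (Mat N d) (Mat N d)))
          ((ContinuousLinearMap.adjoint
            (G'.comp (ContinuousLinearMap.inl ℝ (Mat N d) (Mat N d)))) X), X⟫ ≤ 0 := by
  intro X
  subst hhD
  have hcomp : HasFDerivAt (fun D' => G (h D', D'))
      (G'.comp (h'.prod (ContinuousLinearMap.id ℝ (Mat N d)))) D :=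
    HasFDerivAt.comp D hG' (hh.prodMk (hasFDerivAt_id D))
  have hzero : HasFDerivAt (fun D' => G (h D', D')) (0 : Mat N d →L[ℝ] Mat N d) D :=
    (hasFDerivAt_const (0 : Mat N d) D).congr_of_eventuallyEq
      (Filter.mem_of_superset hO hnullO)
  set GJ := G'.comp (ContinuousLinearMap.inl ℝ (Mat N d) (Mat N d)) with hGJ
  set Y := ContinuousLinearMap.adjoint GJ X with hY
  have hsum : GJ (h' Y) + G' (0, Y) = 0 := by
    have hprod : G' (h' Y, Y) = 0 := DFunLike.congr_fun (hcomp.unique hzero) Y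
    simpa [hGJ, ← map_add] using hprod
  have hadj : ⟪GJ (h' Y), X⟫ = ⟪h' Y, Y⟫ :=
    (ContinuousLinearMap.adjoint_inner_right GJ (h' Y) X).symm
  change ⟪G' (0, Y), X⟫ ≤ 0
  rw [eq_neg_of_add_eq_zero_right hsum, inner_neg_left, hadj]
  exact neg_nonpos.mpr (hpsd Y)
end

section
/- Let A ⊆ M×M be a maximal monotone p-coercive graph and let ε ∈ (0,1). Then for any (J₁,D₁),(J₂,D₂) ∈ A^ε_ε one has (J₁−J₂):(D₁−D₂) ≥ (ε/(1+2ε²))·(|J₁−J₂|² + (1+ε²)|D₁−D₂|²). -/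
/-!
Write `j`, `δ` for the differences of the `J̄`'s and of the `D`'s. The differences of the `D̄`'s and
of the `J`'s are then `δ - ε j` and `j + ε δ`. Monotonicity of `A` says `⟪j, δ⟫ ≥ ε ‖j‖²`, and after
expanding both sides and multiplying by `1 + 2ε²` the claim becomes exactly this inequality.
-/


open scoped RealInnerProductSpace

/-- The approximate graph A^ε_ε: (J,D) ∈ A^ε_ε iff there is (J̄,D̄) ∈ A with
D = D̄ + εJ̄ and J = J̄ + εD. -/
def approxGraph {N d : ℕ} (ε : ℝ) (A : Set (Mat N d × Mat N d)) :
    Set (Mat N d × Mat N d) :=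
  {q | ∃ Jb Db : Mat N d, (Jb, Db) ∈ A ∧ q.2 = Db + ε • Jb ∧ q.1 = Jb + ε • q.2}

/-- Let A ⊆ M×M be a maximal monotone p-coercive graph and let ε ∈ (0,1).
Then for any (J₁,D₁),(J₂,D₂) ∈ A^ε_ε one has
(J₁−J₂):(D₁−D₂) ≥ (ε/(1+2ε²))·(|J₁−J₂|² + (1+ε²)|D₁−D₂|²). -/
theorem approxGraph_uniformly_monotone {N d : ℕ} (hN : 1 ≤ N) (hd : 1 ≤ d)
    (p : ℝ) (hp : 1 < p)
    (A : Set (Mat N d × Mat N d))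
    (hA1 : ((0 : Mat N d), (0 : Mat N d)) ∈ A)
    (hA2 : ∀ q₁ ∈ A, ∀ q₂ ∈ A, 0 ≤ ⟪q₁.1 - q₂.1, q₁.2 - q₂.2⟫)
    (hA3 : ∀ q : Mat N d × Mat N d, (∀ q' ∈ A, 0 ≤ ⟪q.1 - q'.1, q.2 - q'.2⟫) → q ∈ A)
    (hA4 : ∃ C₁ C₂ : ℝ, 0 < C₁ ∧ 0 < C₂ ∧ ∀ q ∈ A,
      C₁ * (‖q.1‖ ^ (p / (p - 1)) + ‖q.2‖ ^ p) - C₂ ≤ ⟪q.1, q.2⟫)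
    (ε : ℝ) (hε : ε ∈ Set.Ioo (0 : ℝ) 1) :
    ∀ J₁ D₁ J₂ D₂ : Mat N d,
      (J₁, D₁) ∈ approxGraph ε A → (J₂, D₂) ∈ approxGraph ε A →
      ε / (1 + 2 * ε ^ 2) * (‖J₁ - J₂‖ ^ 2 + (1 + ε ^ 2) * ‖D₁ - D₂‖ ^ 2)
        ≤ ⟪J₁ - J₂, D₁ - D₂⟫ := by
  intro J₁ D₁ J₂ D₂ h₁ h₂
  obtain ⟨j₁, e₁, hA₁, hD₁, hJ₁⟩ := h₁
  obtain ⟨j₂, e₂, hA₂, hD₂, hJ₂⟩ := h₂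
  have hm := hA2 _ hA₁ _ hA₂
  dsimp only at hD₁ hJ₁ hD₂ hJ₂ hm
  have he : e₁ - e₂ = (D₁ - D₂) - ε • (j₁ - j₂) := by
    rw [hD₁, hD₂]; module
  have hJ : J₁ - J₂ = (j₁ - j₂) + ε • (D₁ - D₂) := by
    rw [hJ₁, hJ₂]; module
  rw [he, inner_sub_right, real_inner_smul_right, real_inner_self_eq_norm_sq] at hm
  rw [hJ, norm_add_sq_real, norm_smul, inner_add_left, real_inner_smul_left,
    real_inner_smul_right, real_inner_self_eq_norm_sq, mul_pow, Real.norm_eq_abs, sq_abs,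
    div_mul_eq_mul_div, div_le_iff₀ (by positivity)]
  linarith
end

section
/- Let A ⊆ M×M be a maximal monotone p-coercive graph and let ε ∈ (0,1). Then A^ε_ε is a maximal monotone 2-coercive graph (it satisfies (A1), (A2), (A3) and (A4) with p = 2), and there exists a unique single-valued map J*_ε : M → M such that (J,D) ∈ A^ε_ε if and only if J = J*_ε(D); moreover J*_ε(0) = 0 and J*_ε is Lipschitz continuous and uniformly monotone, i.e., there exist constants C₁(ε), C₂(ε) > 0 such that for all D₁,D₂ ∈ M: |J*_ε(D₁) − J*_ε(D₂)| ≤ C₂(ε)|D₁−D₂| and (J*_ε(D₁) − J*_ε(D₂)):(D₁−D₂) ≥ C₁(ε)|D₁−D₂|². -/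
/-!
The heart of the matter is Minty's theorem: for a maximal monotone `A` and every `D` there is
`(J, D - ε J) ∈ A`. By maximality this asks for a point `J` in the intersection, over `q ∈ A`, of
the closed sets `{J | 0 ≤ ⟪J - q.1, D - ε J - q.2⟫}`. Each of these is a ball, so in finite
dimension compactness reduces the question to finitely many `q` (`minty`). The finite case
(`minty_finite`) is a minimax argument carried out by hand: minimising the dual quadratic function
over the simplex of weights yields a primal point, and monotonicity says that the dual value has
the right sign.

The rest is the quantitative estimate `approxGraph_estimate`: differences `ΔJ`, `ΔD` of points of
the approximate graph satisfy `⟪ΔJ, ΔD⟫ ≥ ε ‖ΔD‖²` and `‖ΔJ‖ ≤ (1/ε + ε) ‖ΔD‖`. Together with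
Minty's theorem this makes the approximate graph the graph of a Lipschitz, strongly monotone map
defined everywhere, and the graph of a monotone Lipschitz map is maximal monotone.
-/

open scoped RealInnerProductSpace

section Minty

variable {E : Type*} [NormedAddCommGroup E] [InnerProductSpace ℝ E]

/-- Averaged monotonicity: if the pairs `(J i, D i)` are pairwise monotone, then the
`w`-weighted covariance of `J` and `D` is nonnegative. -/
lemma sum_inner_mean_sub_nonpos {ι : Type*} [Fintype ι] (J D : ι → E)
    (hmono : ∀ i j, 0 ≤ ⟪J i - J j, D i - D j⟫) (w : ι → ℝ) (hw0 : ∀ i, 0 ≤ w i)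
    (hw1 : ∑ i, w i = 1) :
    ⟪∑ i, w i • J i, ∑ i, w i • D i⟫ ≤ ∑ i, w i * ⟪J i, D i⟫ := by
  have h1 : 0 ≤ ∑ i, ∑ j, w i * w j * ⟪J i - J j, D i - D j⟫ :=
    Finset.sum_nonneg fun i _ => Finset.sum_nonneg fun j _ =>
      mul_nonneg (mul_nonneg (hw0 i) (hw0 j)) (hmono i j)
  have hX : ∑ i, ∑ j, w i * w j * ⟪J i, D j⟫ = ⟪∑ i, w i • J i, ∑ i, w i • D i⟫ := by
    rw [sum_inner]
    refine Finset.sum_congr rfl fun i _ => ?_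
    rw [inner_sum]
    refine Finset.sum_congr rfl fun j _ => ?_
    rw [real_inner_smul_left, real_inner_smul_right]
    ring
  have hY : ∑ i, ∑ j, w i * w j * ⟪J i, D i⟫ = ∑ i, w i * ⟪J i, D i⟫ := by
    refine Finset.sum_congr rfl fun i _ => ?_
    calc ∑ j, w i * w j * ⟪J i, D i⟫ = ∑ j, w j * (w i * ⟪J i, D i⟫) :=
          Finset.sum_congr rfl fun j _ => by ring
      _ = w i * ⟪J i, D i⟫ := by rw [← Finset.sum_mul, hw1, one_mul]
  have h2 : ∑ i, ∑ j, w i * w j * ⟪J i - J j, D i - D j⟫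
      = ∑ i, ∑ j, w i * w j * ⟪J i, D i⟫ - ∑ i, ∑ j, w i * w j * ⟪J i, D j⟫
        - ∑ i, ∑ j, w i * w j * ⟪J j, D i⟫ + ∑ i, ∑ j, w i * w j * ⟪J j, D j⟫ := by
    simp only [← Finset.sum_sub_distrib, ← Finset.sum_add_distrib]
    refine Finset.sum_congr rfl fun i _ => Finset.sum_congr rfl fun j _ => ?_
    simp only [inner_sub_left, inner_sub_right]
    ring
  have h3 : ∑ i, ∑ j, w i * w j * ⟪J j, D i⟫ = ∑ i, ∑ j, w i * w j * ⟪J i, D j⟫ := by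
    rw [Finset.sum_comm]
    exact Finset.sum_congr rfl fun i _ => Finset.sum_congr rfl fun j _ => by ring
  have h4 : ∑ i, ∑ j, w i * w j * ⟪J j, D j⟫ = ∑ i, ∑ j, w i * w j * ⟪J i, D i⟫ := by
    rw [Finset.sum_comm]
    exact Finset.sum_congr rfl fun i _ => Finset.sum_congr rfl fun j _ => by ring
  rw [h3, h4, hX, hY] at h2
  linarith

/-- First-order optimality on a segment: a quadratic polynomial `a t + b t²` that is nonnegative
on `[0, 1]` has nonnegative slope at `0`. -/
lemma slope_nonneg_of_quadratic {a b : ℝ}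
    (h : ∀ t : ℝ, 0 ≤ t → t ≤ 1 → 0 ≤ a * t + b * t ^ 2) : 0 ≤ a := by
  by_contra! ha
  have hb : 0 < |b| - a := by linarith [abs_nonneg b]
  -- at this `t` the linear term dominates: `|b| t < -a`
  have ht : 0 < -a / (2 * (|b| - a)) := div_pos (by linarith) (by linarith)
  have ht1 : -a / (2 * (|b| - a)) ≤ 1 := by
    rw [div_le_one (by linarith)]
    linarith [abs_nonneg b]
  have h1 := h _ ht.le ht1
  set t := -a / (2 * (|b| - a)) with htdef
  have h2 : t * (2 * (|b| - a)) = -a := by rw [htdef]; field_simp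
  have h3 : 0 ≤ a + b * t := by
    by_contra! hneg
    nlinarith
  nlinarith [mul_le_mul_of_nonneg_right (le_abs_self b) ht.le, mul_pos ht (neg_pos.2 ha)]

/-- Finite case of Minty's theorem. With `b i = D i - D₀ - ε J i` and `c i = ⟪J i, D i - D₀⟫`,
the `i`-th condition says `ε ‖K‖² + ⟪K, b i⟫ - c i ≤ 0`; the point `K` is read off from a
minimiser over the simplex of the dual function `‖∑ w i b i‖² / (4ε) + ∑ w i c i`. -/
lemma minty_finite {ι : Type*} [Fintype ι] [Nonempty ι] (J D : ι → E)
    (hmono : ∀ i j, 0 ≤ ⟪J i - J j, D i - D j⟫) {ε : ℝ} (hε : 0 < ε) (D₀ : E) :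
    ∃ K : E, ∀ i, 0 ≤ ⟪K - J i, D₀ - ε • K - D i⟫ := by
  classical
  set b : ι → E := fun i => D i - D₀ - ε • J i with hb
  set c : ι → ℝ := fun i => ⟪J i, D i - D₀⟫ with hc
  let B : (ι → ℝ) → E := fun w => ∑ i, w i • b i
  let C : (ι → ℝ) → ℝ := fun w => ∑ i, w i * c i
  have hcont : Continuous fun w : ι → ℝ => ‖B w‖ ^ 2 + 4 * ε * C w := by
    simp only [B, C]
    fun_prop
  obtain ⟨w, hw, hmin⟩ := (isCompact_stdSimplex ℝ ι).exists_isMinOn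
    ⟨_, single_mem_stdSimplex ℝ (Classical.arbitrary ι)⟩ hcont.continuousOn
  -- the dual value is nonnegative: test the weighted primal conditions at `m = ∑ w i J i`
  have hdual : 0 ≤ ‖B w‖ ^ 2 + 4 * ε * C w := by
    have hcov := sum_inner_mean_sub_nonpos J D hmono w hw.1 hw.2
    set m := ∑ i, w i • J i with hm
    have hB : B w = ∑ i, w i • D i - D₀ - ε • m := by
      simp only [B, hb, smul_sub, Finset.sum_sub_distrib, ← Finset.sum_smul, hw.2, one_smul, hm,
        Finset.smul_sum, smul_comm ε]
    have hC : C w = ∑ i, w i * ⟪J i, D i⟫ - ⟪m, D₀⟫ := by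
      simp only [C, hc, inner_sub_right, mul_sub, Finset.sum_sub_distrib, hm, sum_inner,
        real_inner_smul_left]
    have hi : ⟪m, B w⟫ = ⟪m, ∑ i, w i • D i⟫ - ⟪m, D₀⟫ - ε * ‖m‖ ^ 2 := by
      rw [hB, inner_sub_right, inner_sub_right, real_inner_smul_right,
        real_inner_self_eq_norm_sq]
    have hsq : 0 ≤ ‖B w + (2 * ε) • m‖ ^ 2 := sq_nonneg _
    rw [norm_add_sq_real, norm_smul, real_inner_smul_right, real_inner_comm, hi, mul_pow,
      Real.norm_eq_abs, sq_abs] at hsq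
    rw [hC]
    nlinarith
  refine ⟨-(1 / (2 * ε)) • B w, fun i => ?_⟩
  have hopt : 0 ≤ 2 * ⟪B w, b i - B w⟫ + 4 * ε * (c i - C w) := by
    refine slope_nonneg_of_quadratic (b := ‖b i - B w‖ ^ 2) fun t ht0 ht1 => ?_
    have hmem : (1 - t) • w + t • Pi.single i (1 : ℝ) ∈ stdSimplex ℝ ι :=
      convex_stdSimplex ℝ ι hw (single_mem_stdSimplex ℝ i) (by linarith) ht0 (by ring)
    have h := hmin hmem
    have hB : B ((1 - t) • w + t • Pi.single i (1 : ℝ)) = B w + t • (b i - B w) := by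
      simp only [B, Pi.add_apply, Pi.smul_apply, smul_eq_mul, add_smul, Finset.sum_add_distrib,
        mul_smul, ← Finset.smul_sum, Pi.single_apply, ite_smul, one_smul, zero_smul,
        Finset.sum_ite_eq', Finset.mem_univ, if_true]
      module
    have hC : C ((1 - t) • w + t • Pi.single i (1 : ℝ)) = C w + t * (c i - C w) := by
      simp only [C, Pi.add_apply, Pi.smul_apply, smul_eq_mul, add_mul, Finset.sum_add_distrib,
        mul_assoc, ← Finset.mul_sum, Pi.single_apply, ite_mul, one_mul, zero_mul,
        Finset.sum_ite_eq', Finset.mem_univ, if_true]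
      ring
    simp only [Set.mem_ofPred_eq] at h
    rw [hB, hC, norm_add_sq_real, norm_smul, real_inner_smul_right, mul_pow, Real.norm_eq_abs,
      sq_abs] at h
    linarith
  rw [inner_sub_right, real_inner_self_eq_norm_sq] at hopt
  set K := -(1 / (2 * ε)) • B w with hK
  have hBK : B w = -(2 * ε) • K := by
    rw [hK, smul_smul, show -(2 * ε) * -(1 / (2 * ε)) = 1 by field_simp, one_smul]
  have hexp : ⟪K - J i, D₀ - ε • K - D i⟫ = -(ε * ‖K‖ ^ 2 + ⟪K, b i⟫ - c i) := by
    simp only [hb, hc, inner_sub_left, inner_sub_right, real_inner_smul_right,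
      real_inner_self_eq_norm_sq, real_inner_comm K (J i)]
    ring
  rw [hexp]
  rw [hBK] at hopt hdual
  rw [norm_smul, mul_pow, Real.norm_eq_abs, sq_abs] at hopt hdual
  rw [real_inner_smul_left] at hopt
  have h4 : 0 ≤ 4 * ε * (-(ε * ‖K‖ ^ 2 + ⟪K, b i⟫ - c i)) := by nlinarith
  exact nonneg_of_mul_nonneg_right h4 (by positivity)

/-- Minty's theorem: `D + ε J` is onto for a maximal monotone graph. The condition coming from
the point `(0, 0)` of the graph confines `J` to a compact ball. -/
lemma minty [FiniteDimensional ℝ E] (A : Set (E × E)) (h0 : ((0 : E), (0 : E)) ∈ A)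
    (hmono : ∀ q₁ ∈ A, ∀ q₂ ∈ A, 0 ≤ ⟪q₁.1 - q₂.1, q₁.2 - q₂.2⟫)
    (hmax : ∀ q : E × E, (∀ q' ∈ A, 0 ≤ ⟪q.1 - q'.1, q.2 - q'.2⟫) → q ∈ A)
    {ε : ℝ} (hε : 0 < ε) (D₀ : E) : ∃ J : E, (J, D₀ - ε • J) ∈ A := by
  let S : A → Set E := fun q => {K | 0 ≤ ⟪K - q.1.1, D₀ - ε • K - q.1.2⟫}
  have hclosed : ∀ q, IsClosed (S q) := fun q =>
    isClosed_le continuous_const (by fun_prop)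
  have hsub : ∀ K ∈ S ⟨_, h0⟩, K ∈ Metric.closedBall (0 : E) (‖D₀‖ / ε) := by
    intro K hK
    simp only [S, Set.mem_ofPred_eq, sub_zero, inner_zero_right, inner_sub_right,
      real_inner_smul_right, real_inner_self_eq_norm_sq] at hK
    rw [mem_closedBall_zero_iff, le_div_iff₀ hε]
    have h1 := real_inner_le_norm K D₀
    by_contra! hlt
    have hKpos : 0 < ‖K‖ := by
      by_contra! hK0
      have : ‖K‖ = 0 := le_antisymm hK0 (norm_nonneg _)
      rw [this, zero_mul] at hlt
      exact absurd hlt (not_lt.2 (norm_nonneg _))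
    nlinarith
  have := FiniteDimensional.proper ℝ E
  obtain ⟨K, -, hK⟩ := (isCompact_closedBall (0 : E) (‖D₀‖ / ε)).inter_iInter_nonempty S hclosed
    (by
      classical
      intro u
      let v := insert ⟨_, h0⟩ u
      have : Nonempty v := ⟨⟨⟨_, h0⟩, Finset.mem_insert_self _ _⟩⟩
      obtain ⟨K, hK⟩ := minty_finite (ι := v) (fun i => i.1.1.1) (fun i => i.1.1.2)
        (fun i j => hmono _ i.1.2 _ j.1.2) hε D₀
      refine ⟨K, hsub K (hK ⟨⟨_, h0⟩, Finset.mem_insert_self _ _⟩), ?_⟩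
      simp only [Set.mem_iInter]
      exact fun q hq => hK ⟨q, Finset.mem_insert_of_mem hq⟩)
  rw [Set.mem_iInter] at hK
  exact ⟨K, hmax _ fun q hq => hK ⟨q, hq⟩⟩

end Minty

/-- Differences of points of the approximate graph: strong monotonicity comes from the term `ε D`
in `J = J̄ + ε D`, and the Lipschitz bound from the term `ε J̄` in `D = D̄ + ε J̄`. -/
lemma approxGraph_estimate {N d : ℕ} (A : Set (Mat N d × Mat N d))
    (hmono : ∀ q₁ ∈ A, ∀ q₂ ∈ A, 0 ≤ ⟪q₁.1 - q₂.1, q₁.2 - q₂.2⟫) {ε : ℝ} (hε : 0 < ε)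
    (q₁ q₂ : Mat N d × Mat N d) (h₁ : q₁ ∈ approxGraph ε A) (h₂ : q₂ ∈ approxGraph ε A) :
    ‖q₁.1 - q₂.1‖ ≤ (1 / ε + ε) * ‖q₁.2 - q₂.2‖ ∧
      ε * ‖q₁.2 - q₂.2‖ ^ 2 ≤ ⟪q₁.1 - q₂.1, q₁.2 - q₂.2⟫ := by
  obtain ⟨J₁, D₁, hA₁, hD₁, hJ₁⟩ := h₁
  obtain ⟨J₂, D₂, hA₂, hD₂, hJ₂⟩ := h₂
  have hm : 0 ≤ ⟪J₁ - J₂, D₁ - D₂⟫ := hmono _ hA₁ _ hA₂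
  have hJ : q₁.1 - q₂.1 = (J₁ - J₂) + ε • (q₁.2 - q₂.2) := by rw [hJ₁, hJ₂]; module
  have hD : q₁.2 - q₂.2 = (D₁ - D₂) + ε • (J₁ - J₂) := by rw [hD₁, hD₂]; module
  rw [hJ]
  generalize q₁.2 - q₂.2 = x at *
  generalize J₁ - J₂ = j at *
  have hjx : ε * ‖j‖ ^ 2 ≤ ⟪j, x⟫ := by
    rw [hD, inner_add_right, real_inner_smul_right, real_inner_self_eq_norm_sq]
    linarith
  constructor
  · have hj : ‖j‖ ≤ 1 / ε * ‖x‖ := by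
      rw [one_div, inv_mul_eq_div, le_div_iff₀ hε]
      have h1 := real_inner_le_norm j x
      rcases (norm_nonneg j).eq_or_lt with h | h
      · rw [← h, zero_mul]; exact norm_nonneg _
      · nlinarith
    calc ‖j + ε • x‖ ≤ ‖j‖ + ‖ε • x‖ := norm_add_le _ _
      _ = ‖j‖ + ε * ‖x‖ := by rw [norm_smul, Real.norm_of_nonneg hε.le]
      _ ≤ (1 / ε + ε) * ‖x‖ := by linarith
  · rw [inner_add_left, real_inner_smul_left, real_inner_self_eq_norm_sq]
    nlinarith [mul_nonneg hε.le (sq_nonneg ‖j‖)]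

/-- Let A be a maximal monotone p-coercive graph and ε ∈ (0,1). Then A^ε_ε
is a maximal monotone 2-coercive graph, and there is a unique single-valued map
J*_ε : M → M with (J,D) ∈ A^ε_ε ↔ J = J*_ε(D); moreover J*_ε(0) = 0 and J*_ε is
Lipschitz continuous and uniformly monotone. -/
theorem approxGraph_max_monotone_two_coercive_selection {N d : ℕ} (hN : 1 ≤ N) (hd : 1 ≤ d)
    (p : ℝ) (hp : 1 < p)
    (A : Set (Mat N d × Mat N d))
    (hA1 : ((0 : Mat N d), (0 : Mat N d)) ∈ A)
    (hA2 : ∀ q₁ ∈ A, ∀ q₂ ∈ A, 0 ≤ ⟪q₁.1 - q₂.1, q₁.2 - q₂.2⟫)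
    (hA3 : ∀ q : Mat N d × Mat N d, (∀ q' ∈ A, 0 ≤ ⟪q.1 - q'.1, q.2 - q'.2⟫) → q ∈ A)
    (hA4 : ∃ C₁ C₂ : ℝ, 0 < C₁ ∧ 0 < C₂ ∧ ∀ q ∈ A,
      C₁ * (‖q.1‖ ^ (p / (p - 1)) + ‖q.2‖ ^ p) - C₂ ≤ ⟪q.1, q.2⟫)
    (ε : ℝ) (hε : ε ∈ Set.Ioo (0 : ℝ) 1) :
    -- (A1) for A^ε_ε
    (((0 : Mat N d), (0 : Mat N d)) ∈ approxGraph ε A) ∧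
    -- (A2) for A^ε_ε
    (∀ q₁ ∈ approxGraph ε A, ∀ q₂ ∈ approxGraph ε A,
      0 ≤ ⟪q₁.1 - q₂.1, q₁.2 - q₂.2⟫) ∧
    -- (A3) for A^ε_ε
    (∀ q : Mat N d × Mat N d,
      (∀ q' ∈ approxGraph ε A, 0 ≤ ⟪q.1 - q'.1, q.2 - q'.2⟫) → q ∈ approxGraph ε A) ∧
    -- (A4) for A^ε_ε with p = 2 (so p' = 2 as well)
    (∃ C₁ C₂ : ℝ, 0 < C₁ ∧ 0 < C₂ ∧ ∀ q ∈ approxGraph ε A,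
      C₁ * (‖q.1‖ ^ 2 + ‖q.2‖ ^ 2) - C₂ ≤ ⟪q.1, q.2⟫) ∧
    -- unique single-valued selection
    (∃! f : Mat N d → Mat N d, ∀ J D : Mat N d, (J, D) ∈ approxGraph ε A ↔ J = f D) ∧
    -- its properties: f(0) = 0, Lipschitz continuity, uniform monotonicity
    (∀ f : Mat N d → Mat N d, (∀ J D : Mat N d, (J, D) ∈ approxGraph ε A ↔ J = f D) →
      f 0 = 0 ∧
      ∃ C₁ C₂ : ℝ, 0 < C₁ ∧ 0 < C₂ ∧ ∀ D₁ D₂ : Mat N d,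
        ‖f D₁ - f D₂‖ ≤ C₂ * ‖D₁ - D₂‖ ∧
        C₁ * ‖D₁ - D₂‖ ^ 2 ≤ ⟪f D₁ - f D₂, D₁ - D₂⟫) := by
  have hε0 : 0 < ε := hε.1
  have hest := approxGraph_estimate A hA2 hε0
  set L : ℝ := 1 / ε + ε with hLdef
  have hL : 0 < L := by positivity
  have hzero : ((0 : Mat N d), (0 : Mat N d)) ∈ approxGraph ε A :=
    ⟨0, 0, hA1, by simp, by simp⟩
  have hex : ∀ D : Mat N d, ∃ J : Mat N d, (J, D) ∈ approxGraph ε A := fun D => by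
    obtain ⟨K, hK⟩ := minty A hA1 hA2 hA3 hε0 D
    exact ⟨K + ε • D, K, D - ε • K, hK, by simp, rfl⟩
  have huniq : ∀ J J' D : Mat N d, (J, D) ∈ approxGraph ε A → (J', D) ∈ approxGraph ε A →
      J = J' := fun J J' D h h' => by
    have := (hest _ _ h h').1
    simp only [sub_self, norm_zero, mul_zero] at this
    exact sub_eq_zero.1 (norm_le_zero_iff.1 this)
  refine ⟨hzero, ?_, ?_, ?_, ?_, ?_⟩
  · intro q₁ h₁ q₂ h₂
    exact (mul_nonneg hε0.le (sq_nonneg _)).trans (hest _ _ h₁ h₂).2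
  · rintro ⟨J, D⟩ hq
    obtain ⟨J₀, h₀⟩ := hex D
    -- Test at `D - t v` with `v = J₀ - J`; by the Lipschitz bound the perturbation of the value
    -- is at most `‖v‖ / 2` for `t = 1 / (2 L)`, which forces `v = 0`.
    set v := J₀ - J with hv
    obtain ⟨J₁, h₁⟩ := hex (D - (1 / (2 * L)) • v)
    have hm := hq _ h₁
    simp only [sub_sub_cancel, real_inner_smul_right] at hm
    have hm' : 0 ≤ ⟪J - J₁, v⟫ := nonneg_of_mul_nonneg_right hm (by positivity)
    have hl := (hest _ _ h₀ h₁).1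
    simp only [sub_sub_cancel, norm_smul] at hl
    rw [Real.norm_of_nonneg (by positivity), ← mul_assoc,
      show L * (1 / (2 * L)) = 1 / 2 by field_simp] at hl
    have hsplit : J - J₁ = (J₀ - J₁) - v := by rw [hv]; abel
    rw [hsplit, inner_sub_left, real_inner_self_eq_norm_sq] at hm'
    have hcs := real_inner_le_norm (J₀ - J₁) v
    have hv0 : ‖v‖ = 0 := by
      nlinarith [norm_nonneg v, mul_le_mul_of_nonneg_right hl (norm_nonneg v)]
    have hJJ : J₀ = J := sub_eq_zero.1 (norm_eq_zero.1 hv0)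
    exact hJJ ▸ h₀
  · refine ⟨ε / (L ^ 2 + 1), 1, by positivity, one_pos, fun q hq => ?_⟩
    obtain ⟨h1, h2⟩ := hest _ _ hq hzero
    simp only [sub_zero] at h1 h2
    have h3 : ‖q.1‖ ^ 2 ≤ L ^ 2 * ‖q.2‖ ^ 2 := by
      rw [← mul_pow]
      gcongr
    have h4 : ε / (L ^ 2 + 1) * (‖q.1‖ ^ 2 + ‖q.2‖ ^ 2) ≤ ε * ‖q.2‖ ^ 2 := by
      rw [div_mul_eq_mul_div, div_le_iff₀ (by positivity)]
      nlinarith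
    linarith
  · choose f hf using hex
    refine ⟨f, fun J D => ⟨fun h => huniq _ _ _ h (hf D), fun h => h ▸ hf D⟩, fun g hg => ?_⟩
    funext D
    exact ((hg _ _).1 (hf D)).symm
  · intro f hf
    refine ⟨((hf 0 0).1 hzero).symm, ε, L, hε0, hL, fun D₁ D₂ => ?_⟩
    exact hest (f D₁, D₁) (f D₂, D₂) ((hf _ D₁).2 rfl) ((hf _ D₂).2 rfl)
end

section
/- Let A ⊆ M×M be a maximal monotone p-coercive graph for some p ∈ (1,∞), p' = p/(p−1). Then there exist constants C̃₁, C̃₂ > 0 such that for all ε ∈ (0,1) and all (J,D) ∈ A^ε_ε one has J:D ≥ C̃₁(|J|^{min{p',2}} + |D|^{min{p,2}}) − C̃₂. -/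
/-!
Writing `J = J̄ + εD`, `D = D̄ + εJ̄` with `(J̄, D̄) ∈ A`, one has the identity
`J:D = J̄:D̄ + ε|J̄|² + ε|D|²`, so the coercivity of `A` bounds `J:D` below by
`C₁(|J̄|^{p'} + |D̄|^p) + ε|J̄|² + ε|D|² - C₂`. Conversely, since the exponents are capped
at `2` and `ε < 1`, the powers of `|J|` and `|D|` are controlled by exactly these terms,
uniformly in `ε`: `|J|^{min(p',2)} ≤ 4(|J̄|^{p'} + ε|D|² + 2)`, and likewise for `D`
(`rpow_min_le_of_le_add`).
-/

open scoped RealInnerProductSpace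

lemma rpow_le_rpow_add_one {y r t : ℝ} (hy : 0 ≤ y) (hr : 0 ≤ r) (hrt : r ≤ t) :
    y ^ r ≤ y ^ t + 1 := by
  rcases le_total y 1 with h | h
  · linarith [Real.rpow_le_one hy h hr, Real.rpow_nonneg hy t]
  · linarith [Real.rpow_le_rpow_of_exponent_le h hrt]

/-- The `ε`-uniform bound: capping the exponent at `2` lets `(εb)^r` be absorbed into
`(εb)² + 1 ≤ εb² + 1`. -/
lemma rpow_min_le_of_le_add {x a b ε t : ℝ} (hx : 0 ≤ x) (ha : 0 ≤ a) (hb : 0 ≤ b)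
    (hε : 0 ≤ ε) (hε1 : ε ≤ 1) (ht : 0 ≤ t) (h : x ≤ a + ε * b) :
    x ^ (min t 2) ≤ 4 * (a ^ t + ε * b ^ 2 + 2) := by
  have hr : 0 ≤ min t 2 := le_min ht (by norm_num)
  have h4 : (2 : ℝ) ^ (min t 2) ≤ 4 := by
    calc (2 : ℝ) ^ (min t 2) ≤ 2 ^ (2 : ℝ) :=
          Real.rpow_le_rpow_of_exponent_le (by norm_num) (min_le_right _ _)
      _ = 4 := by norm_num
  have key : ∀ y : ℝ, 0 ≤ y → x ≤ 2 * y → x ^ (min t 2) ≤ 4 * y ^ (min t 2) := by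
    intro y hy hxy
    calc x ^ (min t 2) ≤ (2 * y) ^ (min t 2) := Real.rpow_le_rpow hx hxy hr
      _ = 2 ^ (min t 2) * y ^ (min t 2) := Real.mul_rpow (by norm_num) hy
      _ ≤ _ := mul_le_mul_of_nonneg_right h4 (Real.rpow_nonneg hy _)
  have hat : 0 ≤ a ^ t := Real.rpow_nonneg ha t
  have heb : 0 ≤ ε * b ^ 2 := by positivity
  rcases le_total (ε * b) a with hc | hc
  · have h1 := key a ha (by linarith)
    have h2 := rpow_le_rpow_add_one ha hr (min_le_left t 2)
    linarith
  · have h0 : 0 ≤ ε * b := by positivity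
    have h1 := key (ε * b) h0 (by linarith)
    have h2 := rpow_le_rpow_add_one h0 hr (min_le_right t 2)
    rw [Real.rpow_two] at h2
    have h3 : (ε * b) ^ 2 ≤ ε * b ^ 2 := by
      have : ε * (ε * b ^ 2) ≤ 1 * (ε * b ^ 2) := mul_le_mul_of_nonneg_right hε1 heb
      nlinarith
    linarith

/-- Let A be a maximal monotone p-coercive graph, p ∈ (1,∞), p' = p/(p−1).
Then there exist C̃₁, C̃₂ > 0 such that for all ε ∈ (0,1) and all (J,D) ∈ A^ε_ε one has
J:D ≥ C̃₁(|J|^{min{p',2}} + |D|^{min{p,2}}) − C̃₂. -/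
theorem approxGraph_uniform_coercivity {N d : ℕ} (hN : 1 ≤ N) (hd : 1 ≤ d)
    (p : ℝ) (hp : 1 < p)
    (A : Set (Mat N d × Mat N d))
    (hA1 : ((0 : Mat N d), (0 : Mat N d)) ∈ A)
    (hA2 : ∀ q₁ ∈ A, ∀ q₂ ∈ A, 0 ≤ ⟪q₁.1 - q₂.1, q₁.2 - q₂.2⟫)
    (hA3 : ∀ q : Mat N d × Mat N d, (∀ q' ∈ A, 0 ≤ ⟪q.1 - q'.1, q.2 - q'.2⟫) → q ∈ A)
    (hA4 : ∃ C₁ C₂ : ℝ, 0 < C₁ ∧ 0 < C₂ ∧ ∀ q ∈ A,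
      C₁ * (‖q.1‖ ^ (p / (p - 1)) + ‖q.2‖ ^ p) - C₂ ≤ ⟪q.1, q.2⟫) :
    ∃ C₁ C₂ : ℝ, 0 < C₁ ∧ 0 < C₂ ∧
      ∀ ε ∈ Set.Ioo (0 : ℝ) 1, ∀ q ∈ approxGraph ε A,
        C₁ * (‖q.1‖ ^ (min (p / (p - 1)) 2) + ‖q.2‖ ^ (min p 2)) - C₂
          ≤ ⟪q.1, q.2⟫ := by
  obtain ⟨C₁, C₂, hC₁, hC₂, hco⟩ := hA4
  have hm : 0 < min C₁ 1 := lt_min hC₁ one_pos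
  -- The factor `4` is that of `rpow_min_le_of_le_add`; its two additive constants `4 * 2`
  -- sum to `16`, contributing `(min C₁ 1 / 4) * 16` to the second constant.
  refine ⟨min C₁ 1 / 4, C₂ + 4 * min C₁ 1, by positivity, by positivity, ?_⟩
  rintro ε ⟨hε, hε1⟩ ⟨J, D⟩ ⟨Jb, Db, hmem, hD, hJ⟩
  dsimp only at hD hJ ⊢
  have hc := hco _ hmem
  dsimp only at hc
  have hp' : 0 ≤ p / (p - 1) := div_nonneg (by linarith) (by linarith)
  have nJ : ‖J‖ ≤ ‖Jb‖ + ε * ‖D‖ := by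
    rw [hJ]
    refine (norm_add_le _ _).trans_eq ?_
    rw [norm_smul, Real.norm_of_nonneg hε.le]
  have nD : ‖D‖ ≤ ‖Db‖ + ε * ‖Jb‖ := by
    rw [hD]
    refine (norm_add_le _ _).trans_eq ?_
    rw [norm_smul, Real.norm_of_nonneg hε.le]
  have bJ := rpow_min_le_of_le_add (norm_nonneg J) (norm_nonneg Jb) (norm_nonneg D)
    hε.le hε1.le hp' nJ
  have bD := rpow_min_le_of_le_add (norm_nonneg D) (norm_nonneg Db) (norm_nonneg Jb)
    hε.le hε1.le (by linarith : (0 : ℝ) ≤ p) nD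
  have hid : ⟪J, D⟫ = ⟪Jb, Db⟫ + ε * ‖Jb‖ ^ 2 + ε * ‖D‖ ^ 2 := by
    have h1 : ⟪Jb, D⟫ = ⟪Jb, Db⟫ + ε * ‖Jb‖ ^ 2 := by
      rw [hD, inner_add_right, real_inner_smul_right, real_inner_self_eq_norm_sq]
    rw [hJ, inner_add_left, real_inner_smul_left, real_inner_self_eq_norm_sq, h1]
  have hX : 0 ≤ ‖Jb‖ ^ (p / (p - 1)) + ‖Db‖ ^ p := by positivity
  have hY : 0 ≤ ε * ‖Jb‖ ^ 2 + ε * ‖D‖ ^ 2 := by positivity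
  have e1 := mul_le_mul_of_nonneg_right (min_le_left C₁ 1) hX
  have e2 := mul_le_mul_of_nonneg_right (min_le_right C₁ 1) hY
  have e3 := mul_le_mul_of_nonneg_left (add_le_add bJ bD) (by positivity : 0 ≤ min C₁ 1 / 4)
  rw [hid]
  linarith
end

section
/- Let G : M×M → M be such that its null set {(J,D) : G(J,D) = 0} is a monotone graph, i.e., any two null points (J₁,D₁),(J₂,D₂) of G satisfy (J₁−J₂):(D₁−D₂) ≥ 0. For ε ∈ (0,1) define G_ε(J,D) := G(J − εD, D − εJ). Then: (i) (J̄,D̄) is a null point of G if and only if (J,D) := ((J̄+εD̄)/(1−ε²), (D̄+εJ̄)/(1−ε²)) is a null point of G_ε; and (ii) any two null points (J₁,D₁),(J₂,D₂) of G_ε satisfy (J₁−J₂):(D₁−D₂) ≥ (ε/(1+ε²))·(|J₁−J₂|² + |D₁−D₂|²). -/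
/-!
The map `(J, D) ↦ (J - εD, D - εJ)` is a linear bijection, since its determinant `1 - ε²` is
nonzero; its inverse is `(J̄, D̄) ↦ ((J̄ + εD̄), (D̄ + εJ̄)) / (1 - ε²)`, which gives (i).
For (ii), monotonicity is applied to the images of two null points: with `x = J₁ - J₂` and
`y = D₁ - D₂`, it reads
`0 ≤ ⟪x - εy, y - εx⟫ = (1 + ε²) ⟪x, y⟫ - ε (‖x‖² + ‖y‖²)`.
-/

open scoped RealInnerProductSpace

/-- Let G have a monotone null set and let ε ∈ (0,1). Define
G_ε(J,D) := G(J − εD, D − εJ). Then (i) (J̄,D̄) is a null point of G iff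
((J̄+εD̄)/(1−ε²), (D̄+εJ̄)/(1−ε²)) is a null point of G_ε; and (ii) any two null points
(J₁,D₁),(J₂,D₂) of G_ε satisfy
(J₁−J₂):(D₁−D₂) ≥ (ε/(1+ε²))·(|J₁−J₂|² + |D₁−D₂|²). -/
theorem Geps_null_points {N d : ℕ} (hN : 1 ≤ N) (hd : 1 ≤ d)
    (G : Mat N d × Mat N d → Mat N d)
    (hmono : ∀ J₁ D₁ J₂ D₂ : Mat N d, G (J₁, D₁) = 0 → G (J₂, D₂) = 0 →
      0 ≤ ⟪J₁ - J₂, D₁ - D₂⟫)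
    (ε : ℝ) (hε : ε ∈ Set.Ioo (0 : ℝ) 1) :
    -- (i)
    (∀ Jb Db : Mat N d,
      G (Jb, Db) = 0 ↔
        G (((1 - ε ^ 2)⁻¹ • (Jb + ε • Db)) - ε • ((1 - ε ^ 2)⁻¹ • (Db + ε • Jb)),
           ((1 - ε ^ 2)⁻¹ • (Db + ε • Jb)) - ε • ((1 - ε ^ 2)⁻¹ • (Jb + ε • Db))) = 0) ∧
    -- (ii)
    (∀ J₁ D₁ J₂ D₂ : Mat N d,
      G (J₁ - ε • D₁, D₁ - ε • J₁) = 0 → G (J₂ - ε • D₂, D₂ - ε • J₂) = 0 →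
      ε / (1 + ε ^ 2) * (‖J₁ - J₂‖ ^ 2 + ‖D₁ - D₂‖ ^ 2) ≤ ⟪J₁ - J₂, D₁ - D₂⟫) := by
  obtain ⟨h0, h1⟩ := hε
  have hne : 1 - ε ^ 2 ≠ 0 := by nlinarith
  refine ⟨fun Jb Db => ?_, fun J₁ D₁ J₂ D₂ hG₁ hG₂ => ?_⟩
  · have key : ∀ x y : Mat N d,
        (1 - ε ^ 2)⁻¹ • (x + ε • y) - ε • ((1 - ε ^ 2)⁻¹ • (y + ε • x)) = x := by
      intro x y
      ext i
      simp only [PiLp.sub_apply, PiLp.smul_apply, PiLp.add_apply, smul_eq_mul]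
      field_simp
      ring
    rw [key Jb Db, key Db Jb]
  · have h := hmono _ _ _ _ hG₁ hG₂
    have e₁ : (J₁ - ε • D₁) - (J₂ - ε • D₂) = (J₁ - J₂) - ε • (D₁ - D₂) := by module
    have e₂ : (D₁ - ε • J₁) - (D₂ - ε • J₂) = (D₁ - D₂) - ε • (J₁ - J₂) := by module
    rw [e₁, e₂] at h
    simp only [inner_sub_left _ (ε • _), inner_sub_right _ _ (ε • _), real_inner_smul_left,
      real_inner_smul_right, real_inner_self_eq_norm_sq,
      real_inner_comm (J₁ - J₂) (D₁ - D₂)] at h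
    rw [div_mul_eq_mul_div, div_le_iff₀ (by positivity)]
    linarith
end

section
/- Let p ∈ (1,∞), p' = p/(p−1), and let A ⊆ M×M be a maximal monotone p-coercive graph. Let Q ⊂ ℝ^{1+d} be a bounded Lebesgue-measurable set. Then for every measurable D : Q → M with ∫_Q |D|^p < ∞ there exists a measurable J : Q → M with ∫_Q |J|^{p'} < ∞ such that (J(z), D(z)) ∈ A for almost every z ∈ Q. -/
/-!
By maximality, `(J, D) ∈ A` is equivalent to a family of inequalities, so it suffices to produce
a Borel map `S` with `(S D, D) ∈ A` for all `D`; the required field is then `S ∘ D`, whose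
`p'`-integrability follows from coercivity and Young's inequality (`coercive_bound`).

The map `S` is obtained by regularization. For `ε > 0`, Minty's theorem (`exists_resolvent`)
gives `J_ε` with `(J_ε, D - ε J_ε) ∈ A`. By monotonicity `J_ε` is a Lipschitz function of `D`,
and `‖J_ε - J_δ‖² ≤ ‖J_ε‖² - ‖J_δ‖²` for `ε ≤ δ` (`resolvent_sq_le`). Coercivity bounds `J_ε`
uniformly in `ε`, so `J_ε` converges as `ε → 0`; the limit lies in the graph over `D`, and it is
Borel in `D` as a pointwise limit of continuous maps.

Minty's theorem reduces by compactness to a finite monotone set (`minty_finite`). There one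
minimizes a convex quadratic function over the convex hull of the points `(x, y, ⟪x, y⟫)`:
monotonicity makes the minimum nonnegative, and this together with the first-order optimality
conditions gives the inequalities wanted.
-/

open scoped RealInnerProductSpace
open MeasureTheory

/-! ### Minty's theorem and regularized solutions -/

section MonotoneGraph

variable {H : Type*} [NormedAddCommGroup H] [InnerProductSpace ℝ H]

/-- For a monotone set, the third coordinate dominates the inner product of the first two on the
convex hull of the points `(x, y, ⟪x, y⟫)`. -/
lemma inner_le_of_mem_convexHull (S : Set (H × H))
    (hS : ∀ s ∈ S, ∀ t ∈ S, 0 ≤ ⟪s.1 - t.1, s.2 - t.2⟫) (q : H × H × ℝ)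
    (hq : q ∈ convexHull ℝ ((fun s : H × H => (s.1, s.2, ⟪s.1, s.2⟫)) '' S)) :
    ⟪q.1, q.2.1⟫ ≤ q.2.2 := by
  -- The polarized inequality between `r` and `r'` is affine in each variable separately,
  -- so it passes from `S` to the hull one variable at a time.
  have hconv : ∀ r : H × H × ℝ,
      Convex ℝ {r' : H × H × ℝ | ⟪r'.1, r.2.1⟫ + ⟪r.1, r'.2.1⟫ ≤ r'.2.2 + r.2.2} := by
    intro r a ha b hb s t hs ht hst
    simp only [Set.mem_ofPred_eq, Prod.fst_add, Prod.snd_add, Prod.smul_fst, Prod.smul_snd,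
      inner_add_left, inner_add_right, real_inner_smul_left, real_inner_smul_right,
      smul_eq_mul] at ha hb ⊢
    have h1 := mul_le_mul_of_nonneg_left ha hs
    have h2 := mul_le_mul_of_nonneg_left hb ht
    have h3 : r.2.2 = s * r.2.2 + t * r.2.2 := by rw [← add_mul, hst, one_mul]
    linarith
  have h1 : ∀ t ∈ S, ⟪q.1, t.2⟫ + ⟪t.1, q.2.1⟫ ≤ q.2.2 + ⟪t.1, t.2⟫ := by
    intro t ht
    refine convexHull_min ?_ (hconv (t.1, t.2, ⟪t.1, t.2⟫)) hq
    rintro _ ⟨s, hs, rfl⟩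
    have := hS s hs t ht
    simp only [inner_sub_left, inner_sub_right] at this
    simp only [Set.mem_ofPred_eq]
    linarith
  have h2 : ⟪q.1, q.2.1⟫ + ⟪q.1, q.2.1⟫ ≤ q.2.2 + q.2.2 := by
    refine convexHull_min ?_ (hconv q) hq
    rintro _ ⟨t, ht, rfl⟩
    have := h1 t ht
    simp only [Set.mem_ofPred_eq]
    linarith
  linarith

/-- If `0 ≤ t a + t² b` for all `t ∈ (0, 1]` then `0 ≤ a`. -/
lemma nonneg_of_first_order {a b : ℝ} (h : ∀ t : ℝ, 0 < t → t ≤ 1 → 0 ≤ t * a + t ^ 2 * b) :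
    0 ≤ a := by
  by_contra! ha
  have hb : 0 < |b| + 1 := by positivity
  have hd : 0 < -a / (2 * (|b| + 1)) := div_pos (by linarith) (by linarith)
  set t := min 1 (-a / (2 * (|b| + 1))) with ht
  have ht0 : 0 < t := lt_min one_pos hd
  have h1 := h t ht0 (min_le_left _ _)
  have h2 : t * (2 * (|b| + 1)) ≤ -a := by
    have : t ≤ -a / (2 * (|b| + 1)) := min_le_right _ _
    rwa [le_div_iff₀ (by linarith)] at this
  have h3 : 0 ≤ a + t * b := by
    by_contra! hlt
    nlinarith [mul_neg_of_pos_of_neg ht0 hlt]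
  nlinarith [le_abs_self b, mul_le_mul_of_nonneg_left (le_abs_self b) ht0.le, abs_nonneg b]

/-- Minty's theorem for finite monotone sets. -/
lemma minty_finite_s13 (S : Set (H × H)) (hfin : S.Finite)
    (hS : ∀ s ∈ S, ∀ t ∈ S, 0 ≤ ⟪s.1 - t.1, s.2 - t.2⟫) {ε : ℝ} (hε : 0 < ε) :
    ∃ u : H, ∀ s ∈ S, ⟪u - s.1, ε • u + s.2⟫ ≤ 0 := by
  rcases S.eq_empty_or_nonempty with rfl | hne
  · exact ⟨0, by simp⟩
  set K := convexHull ℝ ((fun s : H × H => (s.1, s.2, ⟪s.1, s.2⟫)) '' S) with hK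
  have hKc : IsCompact K := (hfin.image _).isCompact_convexHull ℝ
  have hKne : K.Nonempty := (hne.image _).convexHull
  set g : H × H × ℝ → ℝ := fun q => ‖ε • q.1 - q.2.1‖ ^ 2 + 4 * ε * q.2.2 with hg
  have hgc : Continuous g := by fun_prop
  obtain ⟨q, hqK, hmin⟩ := hKc.exists_isMinOn hKne hgc.continuousOn
  set w := ε • q.1 - q.2.1 with hw
  have hinner := inner_le_of_mem_convexHull S hS q hqK
  have hpos : 0 ≤ ‖w‖ ^ 2 + 4 * ε * q.2.2 := by
    have h1 : 0 ≤ ‖ε • q.1 + q.2.1‖ ^ 2 := sq_nonneg _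
    have h2 : ‖ε • q.1 + q.2.1‖ ^ 2 = ‖w‖ ^ 2 + 4 * (ε * ⟪q.1, q.2.1⟫) := by
      rw [hw, norm_add_sq_real, norm_sub_sq_real, real_inner_smul_left]; ring
    nlinarith
  refine ⟨(2 * ε)⁻¹ • w, fun s hs => ?_⟩
  set v := ε • s.1 - s.2 with hv
  have hsK : (s.1, s.2, ⟪s.1, s.2⟫) ∈ K := subset_convexHull ℝ _ ⟨s, hs, rfl⟩
  have hopt : 0 ≤ 2 * ⟪w, v - w⟫ + 4 * ε * (⟪s.1, s.2⟫ - q.2.2) := by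
    refine nonneg_of_first_order (b := ‖v - w‖ ^ 2) fun t ht0 ht1 => ?_
    have hmem : (1 - t) • q + t • ((s.1, s.2, ⟪s.1, s.2⟫) : H × H × ℝ) ∈ K :=
      (convex_convexHull ℝ _) hqK hsK (by linarith) ht0.le (by ring)
    have hle := isMinOn_iff.1 hmin _ hmem
    have e1 : ε • ((1 - t) • q.1 + t • s.1) - ((1 - t) • q.2.1 + t • s.2)
        = w + t • (v - w) := by
      rw [hw, hv]; module
    simp only [hg, Prod.fst_add, Prod.snd_add, Prod.smul_fst, Prod.smul_snd, smul_eq_mul] at hle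
    rw [e1, ← hw, norm_add_sq_real, norm_smul, real_inner_smul_right, mul_pow,
      Real.norm_eq_abs, sq_abs] at hle
    linarith
  have hkey : ⟪w, v⟫ + 2 * ε * ⟪s.1, s.2⟫ ≥ ‖w‖ ^ 2 / 2 := by
    rw [inner_sub_right, real_inner_self_eq_norm_sq] at hopt
    linarith
  have hexp : 4 * ε * ⟪(2 * ε)⁻¹ • w - s.1, ε • (2 * ε)⁻¹ • w + s.2⟫
      = ‖w‖ ^ 2 - 2 * ⟪w, v⟫ - 4 * ε * ⟪s.1, s.2⟫ := by
    have e2 : ε • (2 * ε)⁻¹ • w = (2⁻¹ : ℝ) • w := by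
      rw [smul_smul]; congr 1; field_simp
    rw [e2, hv]
    simp only [inner_sub_left, inner_add_right, inner_sub_right, real_inner_smul_left,
      real_inner_smul_right, real_inner_self_eq_norm_sq, real_inner_comm w s.1]
    field_simp
    ring
  nlinarith

/-- Minty's theorem in finite dimension, with the identity acting on the first component of the
graph: the equation `ε J + D' = D` has a solution `(J, D') ∈ A`. -/
lemma exists_resolvent [FiniteDimensional ℝ H] (A : Set (H × H))
    (hA1 : ((0 : H), (0 : H)) ∈ A)
    (hA2 : ∀ q₁ ∈ A, ∀ q₂ ∈ A, 0 ≤ ⟪q₁.1 - q₂.1, q₁.2 - q₂.2⟫)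
    (hA3 : ∀ q : H × H, (∀ q' ∈ A, 0 ≤ ⟪q.1 - q'.1, q.2 - q'.2⟫) → q ∈ A)
    {ε : ℝ} (hε : 0 < ε) (D : H) : ∃ J : H, (J, D - ε • J) ∈ A := by
  have : ProperSpace H := FiniteDimensional.proper ℝ H
  let F : A → Set H := fun q => {J | 0 ≤ ⟪J - q.1.1, D - ε • J - q.1.2⟫}
  have hcl : ∀ q, IsClosed (F q) := fun q =>
    isClosed_le continuous_const (by fun_prop)
  have hcpt : IsCompact (F ⟨(0, 0), hA1⟩) := by
    refine Metric.isCompact_of_isClosed_isBounded (hcl _) ?_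
    refine (Metric.isBounded_closedBall (x := (0 : H)) (r := ‖D‖ / ε)).subset fun J hJ => ?_
    have hJ' : 0 ≤ ⟪J - 0, D - ε • J - 0⟫ := hJ
    rw [sub_zero, sub_zero, inner_sub_right, real_inner_smul_right,
      real_inner_self_eq_norm_sq] at hJ'
    have h1 := real_inner_le_norm J D
    rw [mem_closedBall_zero_iff, le_div_iff₀ hε]
    rcases (norm_nonneg J).eq_or_lt with h0 | h0
    · rw [← h0]; simp
    · nlinarith
  obtain ⟨J, -, hJ⟩ := hcpt.inter_iInter_nonempty F hcl (by
    intro u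
    let S : Set (H × H) :=
      (fun q : A => (q.1.1, q.1.2 - D)) '' (insert ⟨(0, 0), hA1⟩ (u : Set A))
    have hfin : S.Finite := (u.finite_toSet.insert _).image _
    obtain ⟨J, hJ⟩ := minty_finite_s13 S hfin (by
      rintro _ ⟨a, -, rfl⟩ _ ⟨b, -, rfl⟩
      simpa using hA2 a.1 a.2 b.1 b.2) hε
    have hF : ∀ q ∈ insert ⟨(0, 0), hA1⟩ (u : Set A), J ∈ F q := by
      intro q hq
      have h := hJ _ ⟨q, hq, rfl⟩
      have e : D - ε • J - q.1.2 = -(ε • J + (q.1.2 - D)) := by abel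
      change 0 ≤ ⟪J - q.1.1, D - ε • J - q.1.2⟫
      rw [e, inner_neg_right]
      linarith
    exact ⟨J, hF _ (Set.mem_insert _ _),
      Set.mem_iInter₂.2 fun q hq => hF q (Set.mem_insert_of_mem _ hq)⟩)
  exact ⟨J, hA3 _ fun q hq => Set.mem_iInter.1 hJ ⟨q, hq⟩⟩

/-- Monotonicity controls the distance between two regularized solutions `a` and `b` over the
same point by the increase of their squared norms. -/
lemma resolvent_sq_le {a b D : H} {ε δ : ℝ} (hε : 0 < ε) (hεδ : ε ≤ δ)
    (h : 0 ≤ ⟪a - b, (D - ε • a) - (D - δ • b)⟫) :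
    ‖a - b‖ ^ 2 ≤ ‖a‖ ^ 2 - ‖b‖ ^ 2 := by
  have e : (D - ε • a) - (D - δ • b) = (δ - ε) • b - ε • (a - b) := by module
  rw [e, inner_sub_right, real_inner_smul_right, real_inner_smul_right,
    real_inner_self_eq_norm_sq] at h
  have h2 : ‖a‖ ^ 2 = ‖a - b‖ ^ 2 + 2 * ⟪a - b, b⟫ + ‖b‖ ^ 2 := by
    rw [← norm_add_sq_real, sub_add_cancel]
  rcases hεδ.eq_or_lt with rfl | hlt
  · have h3 : a - b = 0 := by
      have : ‖a - b‖ ^ 2 ≤ 0 := by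
        by_contra! hc
        nlinarith
      simpa using le_antisymm this (sq_nonneg _)
    rw [sub_eq_zero.1 h3]; simp
  · have h3 : 0 ≤ ⟪a - b, b⟫ := by
      by_contra! hc
      nlinarith [sq_nonneg ‖a - b‖, mul_neg_of_pos_of_neg (sub_pos.2 hlt) hc,
        mul_nonneg hε.le (sq_nonneg ‖a - b‖)]
    linarith

/-- For fixed `ε`, the regularized solution depends Lipschitz-continuously on `D`. -/
lemma resolvent_continuous (A : Set (H × H))
    (hA2 : ∀ q₁ ∈ A, ∀ q₂ ∈ A, 0 ≤ ⟪q₁.1 - q₂.1, q₁.2 - q₂.2⟫)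
    {ε : ℝ} (hε : 0 < ε) (R : H → H) (hR : ∀ D, (R D, D - ε • R D) ∈ A) : Continuous R := by
  refine LipschitzWith.continuous (K := ⟨ε⁻¹, by positivity⟩)
    (LipschitzWith.of_dist_le_mul fun x y => ?_)
  have h := hA2 _ (hR x) _ (hR y)
  have e : (x - ε • R x) - (y - ε • R y) = (x - y) - ε • (R x - R y) := by module
  simp only [e, inner_sub_right _ (x - y), real_inner_smul_right,
    real_inner_self_eq_norm_sq] at h
  have h1 := real_inner_le_norm (R x - R y) (x - y)
  rw [dist_eq_norm, dist_eq_norm]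
  change _ ≤ ε⁻¹ * _
  rw [inv_mul_eq_div, le_div_iff₀ hε]
  rcases (norm_nonneg (R x - R y)).eq_or_lt with h0 | h0
  · rw [← h0]; simp
  · nlinarith

end MonotoneGraph

/-! ### Coercivity and the Borel section -/

/-- The growth bound implied by coercivity, via Young's inequality. -/
lemma coercive_bound {p : ℝ} (hp : 1 < p) {C₁ C₂ : ℝ} (hC₁ : 0 < C₁) (hC₂ : 0 < C₂) :
    ∃ B : ℝ, 0 ≤ B ∧ ∀ j d : ℝ, 0 ≤ j → 0 ≤ d → C₁ * j ^ (p / (p - 1)) - C₂ ≤ j * d →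
      j ^ (p / (p - 1)) ≤ B * (1 + d ^ p) := by
  have hpq : (p / (p - 1)).HolderConjugate p := (Real.HolderConjugate.conjExponent hp).symm
  set q := p / (p - 1)
  -- The weight is chosen so that `(c j) ^ q = (C₁ / 2) j ^ q` can be absorbed.
  set c := (C₁ / 2) ^ (1 / q) with hc
  have hc0 : 0 < c := by positivity
  have hcq : c ^ q = C₁ / 2 := by
    rw [hc, ← Real.rpow_mul (by positivity), one_div_mul_cancel hpq.ne_zero, Real.rpow_one]
  refine ⟨2 / C₁ * (C₂ + c⁻¹ ^ p), by positivity, fun j d hj hd h => ?_⟩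
  have hy := Real.young_inequality_of_nonneg (a := c * j) (b := c⁻¹ * d)
    (by positivity) (by positivity) hpq
  rw [Real.mul_rpow hc0.le hj, Real.mul_rpow (by positivity) hd, hcq,
    show c * j * (c⁻¹ * d) = j * d by field_simp] at hy
  have h1 : C₁ / 2 * j ^ q / q ≤ C₁ / 2 * j ^ q := div_le_self (by positivity) hpq.lt.le
  have h2 : c⁻¹ ^ p * d ^ p / p ≤ c⁻¹ ^ p * d ^ p := div_le_self (by positivity) hp.le
  have h3 : C₁ / 2 * j ^ q ≤ C₂ + c⁻¹ ^ p * d ^ p := by linarith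
  have hdp : 0 ≤ d ^ p := by positivity
  have hcp : 0 ≤ c⁻¹ ^ p := by positivity
  have h4 : C₂ + c⁻¹ ^ p * d ^ p ≤ (C₂ + c⁻¹ ^ p) * (1 + d ^ p) := by
    nlinarith [mul_nonneg hC₂.le hdp]
  calc j ^ q = 2 / C₁ * (C₁ / 2 * j ^ q) := by field_simp
    _ ≤ 2 / C₁ * ((C₂ + c⁻¹ ^ p) * (1 + d ^ p)) :=
      mul_le_mul_of_nonneg_left (h3.trans h4) (by positivity)
    _ = _ := by ring

/-- A coercive maximal monotone graph contains the graph of an everywhere defined Borel map of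
the second component. -/
lemma exists_measurable_section {H : Type*} [NormedAddCommGroup H] [InnerProductSpace ℝ H]
    [FiniteDimensional ℝ H] [MeasurableSpace H] [BorelSpace H]
    {p : ℝ} (hp : 1 < p) (A : Set (H × H))
    (hA1 : ((0 : H), (0 : H)) ∈ A)
    (hA2 : ∀ q₁ ∈ A, ∀ q₂ ∈ A, 0 ≤ ⟪q₁.1 - q₂.1, q₁.2 - q₂.2⟫)
    (hA3 : ∀ q : H × H, (∀ q' ∈ A, 0 ≤ ⟪q.1 - q'.1, q.2 - q'.2⟫) → q ∈ A)
    {C₁ C₂ : ℝ} (hC₁ : 0 < C₁) (hC₂ : 0 < C₂) (hA4 : ∀ q ∈ A,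
      C₁ * (‖q.1‖ ^ (p / (p - 1)) + ‖q.2‖ ^ p) - C₂ ≤ ⟪q.1, q.2⟫) :
    ∃ S : H → H, Measurable S ∧ ∀ D, (S D, D) ∈ A := by
  have : CompleteSpace H := FiniteDimensional.complete ℝ H
  let ε : ℕ → ℝ := fun n => 1 / ((n : ℝ) + 1)
  have hε : ∀ n, 0 < ε n := fun n => by positivity
  have hεanti : Antitone ε := fun m n h => one_div_le_one_div_of_le (by positivity) (by gcongr)
  have hεlim : Filter.Tendsto ε Filter.atTop (nhds 0) := tendsto_one_div_add_atTop_nhds_zero_nat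
  choose R hR using fun n D => exists_resolvent A hA1 hA2 hA3 (hε n) D
  obtain ⟨B, hB0, hB⟩ := coercive_bound hp hC₁ hC₂
  have hq1 : 1 ≤ p / (p - 1) := by
    rw [one_le_div (by linarith)]; linarith
  have hbdd : ∀ D n, ‖R n D‖ ≤ 1 + B * (1 + ‖D‖ ^ p) := by
    intro D n
    have h := hA4 _ (hR n D)
    simp only [inner_sub_right, real_inner_smul_right, real_inner_self_eq_norm_sq] at h
    have h1 := real_inner_le_norm (R n D) D
    have h2 : 0 ≤ ‖D - ε n • R n D‖ ^ p := by positivity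
    have h3 : 0 ≤ ε n * ‖R n D‖ ^ 2 := mul_nonneg (hε n).le (sq_nonneg _)
    have h4 := hB ‖R n D‖ ‖D‖ (norm_nonneg _) (norm_nonneg _) (by nlinarith)
    rcases le_total ‖R n D‖ 1 with h5 | h5
    · have : 0 ≤ B * (1 + ‖D‖ ^ p) := by positivity
      linarith
    · have := Real.self_le_rpow_of_one_le h5 hq1
      linarith
  have hsq : ∀ D m n, m ≤ n → ‖R n D - R m D‖ ^ 2 ≤ ‖R n D‖ ^ 2 - ‖R m D‖ ^ 2 :=
    fun D m n hmn => resolvent_sq_le (hε n) (hεanti hmn) (hA2 _ (hR n D) _ (hR m D))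
  have hlim : ∀ D, ∃ J, Filter.Tendsto (fun n => R n D) Filter.atTop (nhds J) := by
    intro D
    have hmono : Monotone fun n => ‖R n D‖ ^ 2 := fun m n hmn => by
      have := hsq D m n hmn
      have := sq_nonneg ‖R n D - R m D‖
      dsimp only
      linarith
    have hbb : BddAbove (Set.range fun n => ‖R n D‖ ^ 2) := by
      refine ⟨(1 + B * (1 + ‖D‖ ^ p)) ^ 2, ?_⟩
      rintro _ ⟨n, rfl⟩
      exact pow_le_pow_left₀ (norm_nonneg _) (hbdd D n) 2
    have hcs := (tendsto_atTop_ciSup hmono hbb).cauchySeq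
    refine cauchySeq_tendsto_of_complete (Metric.cauchySeq_iff'.2 fun η hη => ?_)
    obtain ⟨N, hN⟩ := Metric.cauchySeq_iff'.1 hcs (η ^ 2) (by positivity)
    refine ⟨N, fun n hn => ?_⟩
    have h1 := hN n hn
    rw [Real.dist_eq] at h1
    rw [dist_eq_norm]
    exact lt_of_pow_lt_pow_left₀ 2 hη.le
      (((hsq D N n hn).trans (le_abs_self _)).trans_lt h1)
  choose S hS using hlim
  refine ⟨S, measurable_of_tendsto_metrizable (f := fun n => R n)
    (fun n => (resolvent_continuous A hA2 (hε n) (R n) (hR n)).measurable)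
    (tendsto_pi_nhds.2 hS), fun D => hA3 _ fun q hq => ?_⟩
  have hD : Filter.Tendsto (fun n => D - ε n • R n D) Filter.atTop (nhds D) := by
    simpa using tendsto_const_nhds.sub (hεlim.smul (hS D))
  exact ge_of_tendsto' (((hS D).sub tendsto_const_nhds).inner (hD.sub tendsto_const_nhds))
    fun n => hA2 _ (hR n D) q hq

/-- Let p ∈ (1,∞), p' = p/(p−1), A a maximal monotone p-coercive graph, and
Q ⊂ ℝ^{1+d} bounded and measurable. Then for every measurable D : Q → M with
∫_Q |D|^p < ∞ there exists a measurable J : Q → M with ∫_Q |J|^{p'} < ∞ such that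
(J(z), D(z)) ∈ A for almost every z ∈ Q. -/
theorem measurable_selection_on_graph {N dm : ℕ} (hN : 1 ≤ N) (hdm : 1 ≤ dm)
    (p : ℝ) (hp : 1 < p)
    (A : Set (Mat N dm × Mat N dm))
    (hA1 : ((0 : Mat N dm), (0 : Mat N dm)) ∈ A)
    (hA2 : ∀ q₁ ∈ A, ∀ q₂ ∈ A, 0 ≤ ⟪q₁.1 - q₂.1, q₁.2 - q₂.2⟫)
    (hA3 : ∀ q : Mat N dm × Mat N dm, (∀ q' ∈ A, 0 ≤ ⟪q.1 - q'.1, q.2 - q'.2⟫) → q ∈ A)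
    (hA4 : ∃ C₁ C₂ : ℝ, 0 < C₁ ∧ 0 < C₂ ∧ ∀ q ∈ A,
      C₁ * (‖q.1‖ ^ (p / (p - 1)) + ‖q.2‖ ^ p) - C₂ ≤ ⟪q.1, q.2⟫)
    (Q : Set (EuclideanSpace ℝ (Fin (1 + dm))))
    (hQmeas : MeasurableSet Q) (hQbdd : Bornology.IsBounded Q)
    (D : EuclideanSpace ℝ (Fin (1 + dm)) → Mat N dm)
    (hDmeas : Measurable D)
    (hDint : IntegrableOn (fun z => ‖D z‖ ^ p) Q) :
    ∃ J : EuclideanSpace ℝ (Fin (1 + dm)) → Mat N dm,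
      Measurable J ∧
      IntegrableOn (fun z => ‖J z‖ ^ (p / (p - 1))) Q ∧
      ∀ᵐ z ∂(volume.restrict Q), (J z, D z) ∈ A := by
  obtain ⟨C₁, C₂, hC₁, hC₂, hA4⟩ := hA4
  obtain ⟨S, hSm, hSA⟩ := exists_measurable_section hp A hA1 hA2 hA3 hC₁ hC₂ hA4
  obtain ⟨B, hB0, hB⟩ := coercive_bound hp hC₁ hC₂
  refine ⟨fun z => S (D z), hSm.comp hDmeas, ?_, Filter.Eventually.of_forall fun z => hSA (D z)⟩
  have hone : IntegrableOn (fun _ : EuclideanSpace ℝ (Fin (1 + dm)) => (1 : ℝ)) Q :=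
    integrableOn_const hQbdd.measure_lt_top.ne
  refine Integrable.mono' ((hone.add hDint).const_mul B)
    ((hSm.comp hDmeas).norm.pow_const _).aestronglyMeasurable
    (Filter.Eventually.of_forall fun z => ?_)
  rw [Real.norm_of_nonneg (by positivity)]
  refine hB _ _ (norm_nonneg _) (norm_nonneg _) ?_
  have h := hA4 _ (hSA (D z))
  have h1 := real_inner_le_norm (S (D z)) (D z)
  have h2 : 0 ≤ C₁ * ‖D z‖ ^ p := by positivity
  simp only [mul_add] at h
  linarith
end

section
/- Let p ∈ (1,∞) and p' = p/(p−1). There exist constants c₁, c₂ > 0 such that for every j ∈ ℝ^d, setting d := (1+|j|²)^{(p'−2)/2} j, one has j·d ≥ c₁(|j|^{p'} + |d|^p) − c₂. (This is the p-coercivity condition (g4) for the constitutive relation d = (1+|j|²)^{(p'−2)/2} j.) -/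
/-!
With `q = p / (p - 1)` and `S = 1 + ‖j‖ ^ 2`, every term is comparable to `S ^ (q / 2)`.
Since `‖j‖ ≤ S ^ (1 / 2)` and `p * (q - 1) = q`, both `‖j‖ ^ q` and `‖d‖ ^ p` are at most
`S ^ (q / 2)`, while the pairing is `S ^ ((q - 2) / 2) * (S - 1) = S ^ (q / 2) - S ^ (q / 2) / S`.
The subtracted term is at most half of `S ^ (q / 2)` if `S ≥ 2`, and at most `2 ^ (q / 2)`
otherwise, so `c₁ = 1 / 4` and `c₂ = 2 ^ (q / 2)` work.
-/

open scoped RealInnerProductSpace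

/-- Let p ∈ (1,∞) and p' = p/(p−1). There exist constants c₁, c₂ > 0 such
that for every j ∈ ℝ^d, setting d := (1+|j|²)^{(p'−2)/2} j, one has
j·d ≥ c₁(|j|^{p'} + |d|^p) − c₂ (the p-coercivity condition (g4) for this relation). -/
theorem coercivity_power_law {n : ℕ} (hn : 1 ≤ n) (p : ℝ) (hp : 1 < p) :
    ∃ c₁ c₂ : ℝ, 0 < c₁ ∧ 0 < c₂ ∧
      ∀ j : EuclideanSpace ℝ (Fin n),
        c₁ * (‖j‖ ^ (p / (p - 1)) +
            ‖((1 + ‖j‖ ^ 2) ^ ((p / (p - 1) - 2) / 2)) • j‖ ^ p) - c₂ ≤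
          ⟪j, ((1 + ‖j‖ ^ 2) ^ ((p / (p - 1) - 2) / 2)) • j⟫ := by
  have hp1 : 0 < p - 1 := by linarith
  have hpq : p * (p / (p - 1) - 1) = p / (p - 1) := by field_simp; ring
  have hq : 0 < p / (p - 1) := by positivity
  generalize p / (p - 1) = q at hpq hq ⊢
  refine ⟨1 / 4, 2 ^ (q / 2), by norm_num, by positivity, fun j => ?_⟩
  rw [real_inner_smul_right, real_inner_self_eq_norm_sq, norm_smul]
  have hr : 0 ≤ ‖j‖ := norm_nonneg j
  generalize ‖j‖ = r at hr ⊢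
  obtain ⟨S, hS⟩ : ∃ S, S = 1 + r ^ 2 := ⟨_, rfl⟩
  have hS1 : 1 ≤ S := by nlinarith
  have hS0 : 0 < S := by linarith
  have hrS : r ≤ S ^ (1 / 2 : ℝ) := by
    rw [← Real.sqrt_eq_rpow]
    exact Real.le_sqrt_of_sq_le (by linarith)
  rw [← hS, Real.norm_of_nonneg (by positivity)]
  have h1 : r ^ q ≤ S ^ (q / 2) := by
    calc r ^ q ≤ (S ^ (1 / 2 : ℝ)) ^ q := Real.rpow_le_rpow hr hrS hq.le
      _ = S ^ (q / 2) := by rw [← Real.rpow_mul hS0.le]; ring_nf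
  have h2 : (S ^ ((q - 2) / 2) * r) ^ p ≤ S ^ (q / 2) := by
    calc (S ^ ((q - 2) / 2) * r) ^ p
        ≤ (S ^ ((q - 2) / 2) * S ^ (1 / 2 : ℝ)) ^ p := by gcongr
      _ = S ^ (q / 2) := by
        rw [← Real.rpow_add hS0, ← Real.rpow_mul hS0.le]
        congr 1
        linear_combination hpq / 2
  have hA : S ^ (q / 2) = S ^ ((q - 2) / 2) * S := by
    rw [← Real.rpow_add_one hS0.ne']
    ring_nf
  have hB : 0 < S ^ ((q - 2) / 2) := by positivity
  have hr2 : r ^ 2 = S - 1 := by linarith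
  have hc : (0 : ℝ) < 2 ^ (q / 2) := by positivity
  rw [hr2]
  rcases le_total 2 S with h | h
  · nlinarith
  · have h3 : S ^ (q / 2) ≤ 2 ^ (q / 2) := by gcongr
    nlinarith
end

section
/- Let p' ∈ (1,∞). For all j, x ∈ ℝ^d one has (1+|j|²)^{(p'−2)/2}|x|² + (p'−2)(1+|j|²)^{(p'−4)/2}(j·x)² ≥ min{1, p'−1}·(1+|j|²)^{(p'−2)/2}|x|². In particular, the derivative of the map j ↦ (1+|j|²)^{(p'−2)/2} j is positive definite at every j ∈ ℝ^d. -/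
/-!
Put `s = 1 + ‖j‖²` and `a = s ^ ((p' - 4) / 2) > 0`, so that `s ^ ((p' - 2) / 2) = a * s`.
Cauchy–Schwarz gives `⟪j, x⟫² ≤ ‖j‖² ‖x‖² ≤ s ‖x‖²`. For `p' ≥ 2` the second term of the quadratic
form is nonnegative; for `p' < 2` it is at least `(p' - 2) * a * s * ‖x‖²`. The lower bound thus
holds with constant `min 1 (p' - 1)`, which is positive, and positive definiteness follows.
-/

open scoped RealInnerProductSpace

/-- Let p' ∈ (1,∞). For all j, x ∈ ℝ^d one has
(1+|j|²)^{(p'−2)/2}|x|² + (p'−2)(1+|j|²)^{(p'−4)/2}(j·x)² ≥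
min{1, p'−1}·(1+|j|²)^{(p'−2)/2}|x|². In particular, the derivative of the map
j ↦ (1+|j|²)^{(p'−2)/2} j, namely x ↦ (1+|j|²)^{(p'−2)/2} x + (p'−2)(1+|j|²)^{(p'−4)/2}(j·x) j,
is positive definite at every j. -/
theorem power_law_derivative_positive_definite {n : ℕ} (hn : 1 ≤ n)
    (p' : ℝ) (hp' : 1 < p') :
    ∀ j x : EuclideanSpace ℝ (Fin n),
      (min 1 (p' - 1) * ((1 + ‖j‖ ^ 2) ^ ((p' - 2) / 2) * ‖x‖ ^ 2) ≤
        (1 + ‖j‖ ^ 2) ^ ((p' - 2) / 2) * ‖x‖ ^ 2 +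
          (p' - 2) * ((1 + ‖j‖ ^ 2) ^ ((p' - 4) / 2) * ⟪j, x⟫ ^ 2)) ∧
      (x ≠ 0 →
        0 < ⟪((1 + ‖j‖ ^ 2) ^ ((p' - 2) / 2)) • x +
              ((p' - 2) * (1 + ‖j‖ ^ 2) ^ ((p' - 4) / 2) * ⟪j, x⟫) • j, x⟫) := by
  intro j x
  have hs : 0 < 1 + ‖j‖ ^ 2 := by positivity
  have ha : 0 < (1 + ‖j‖ ^ 2) ^ ((p' - 4) / 2) := Real.rpow_pos_of_pos hs _
  have hb : (1 + ‖j‖ ^ 2) ^ ((p' - 2) / 2) =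
      (1 + ‖j‖ ^ 2) ^ ((p' - 4) / 2) * (1 + ‖j‖ ^ 2) := by
    rw [← Real.rpow_add_one hs.ne']
    congr 1
    ring
  have hcs : ⟪j, x⟫ ^ 2 ≤ (1 + ‖j‖ ^ 2) * ‖x‖ ^ 2 := by
    have h : |⟪j, x⟫| ^ 2 ≤ (‖j‖ * ‖x‖) ^ 2 :=
      pow_le_pow_left₀ (abs_nonneg _) (abs_real_inner_le_norm j x) 2
    rw [sq_abs] at h
    nlinarith [sq_nonneg ‖x‖]
  have hbound : min 1 (p' - 1) * ((1 + ‖j‖ ^ 2) ^ ((p' - 2) / 2) * ‖x‖ ^ 2) ≤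
      (1 + ‖j‖ ^ 2) ^ ((p' - 2) / 2) * ‖x‖ ^ 2 +
        (p' - 2) * ((1 + ‖j‖ ^ 2) ^ ((p' - 4) / 2) * ⟪j, x⟫ ^ 2) := by
    have hm := mul_le_mul_of_nonneg_left hcs ha.le
    rw [hb]
    rcases le_total 2 p' with h | h
    · rw [min_eq_left (by linarith)]
      have := mul_nonneg (sub_nonneg.2 h) (mul_nonneg ha.le (sq_nonneg ⟪j, x⟫))
      linarith
    · rw [min_eq_right (by linarith)]
      have := mul_le_mul_of_nonneg_left hm (sub_nonneg.2 h)
      linarith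
  refine ⟨hbound, fun hx => ?_⟩
  have hpos : 0 < min 1 (p' - 1) * ((1 + ‖j‖ ^ 2) ^ ((p' - 2) / 2) * ‖x‖ ^ 2) :=
    mul_pos (lt_min one_pos (by linarith))
      (mul_pos (Real.rpow_pos_of_pos hs _) (pow_pos (norm_pos_iff.2 hx) 2))
  rw [inner_add_left, real_inner_smul_left, real_inner_smul_left, real_inner_self_eq_norm_sq]
  linarith
end

section
/- Define a : [0,∞) → [0,1] by a(x) = 1 for x ∈ [0, √2/2], a(x) = (√2 − x)/x for x ∈ (√2/2, √2), and a(x) = 0 for x ≥ √2, and define g : ℝ^d × ℝ^d → ℝ^d by g(j,d) := j − d − a(√2·|j+d|/2)·(j+d). Then g(j,d) = 0 holds if and only if either (d = 0 and |j| ≤ 1) or (d ≠ 0 and j = max{1, |d|^{-1}}·d). -/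
/-!
Put `r = ‖j + d‖`. After rescaling, the coefficient `a` is `1`, `(2 - r) / r` or `0` according as
`r ≤ 1`, `1 < r < 2` or `2 ≤ r` (`aFun_sqrt_two_mul_div`), and the equation `g(j, d) = 0` becomes
`d = 0`, `d = (r - 1) j` or `j = d` respectively. In the middle regime `j + d = r j`, so `‖j‖ = 1`
and `‖d‖ = r - 1` lies in `(0, 1)`, that is, `j = ‖d‖⁻¹ d`. The three regimes match
`d = 0`, `0 < ‖d‖ < 1` and `1 ≤ ‖d‖`.
-/

open scoped RealInnerProductSpace

/-- The activation profile a : [0,∞) → [0,1]: a(x) = 1 on [0,√2/2],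
a(x) = (√2 − x)/x on (√2/2, √2), a(x) = 0 on [√2,∞). -/
noncomputable def aFun (x : ℝ) : ℝ :=
  if x ≤ Real.sqrt 2 / 2 then 1
  else if x < Real.sqrt 2 then (Real.sqrt 2 - x) / x
  else 0

/-- The profile in the variable `r = ‖j + d‖`: the factor `√2 / 2` moves the two thresholds
to `1` and `2`. -/
lemma aFun_sqrt_two_mul_div (r : ℝ) :
    aFun (Real.sqrt 2 * r / 2) = if r ≤ 1 then 1 else if r < 2 then (2 - r) / r else 0 := by
  have h2 : 0 < Real.sqrt 2 := by positivity
  have e1 : Real.sqrt 2 * r / 2 ≤ Real.sqrt 2 / 2 ↔ r ≤ 1 := by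
    constructor <;> intro h <;> nlinarith
  have e2 : Real.sqrt 2 * r / 2 < Real.sqrt 2 ↔ r < 2 := by
    constructor <;> intro h <;> nlinarith
  unfold aFun
  simp only [e1, e2]
  split_ifs with h
  · rfl
  · have : 0 < r := by linarith
    field_simp
  · rfl

/-- with g(j,d) := j − d − a(√2·|j+d|/2)·(j+d), one has g(j,d) = 0 iff
either (d = 0 and |j| ≤ 1) or (d ≠ 0 and j = max{1, |d|⁻¹}·d). -/
theorem step_graph_characterization {n : ℕ} (hn : 1 ≤ n) :
    ∀ j d : EuclideanSpace ℝ (Fin n),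
      j - d - aFun (Real.sqrt 2 * ‖j + d‖ / 2) • (j + d) = 0 ↔
        ((d = 0 ∧ ‖j‖ ≤ 1) ∨ (d ≠ 0 ∧ j = (max 1 ‖d‖⁻¹) • d)) := by
  intro j d
  rw [aFun_sqrt_two_mul_div]
  constructor
  · intro h
    by_cases h1 : ‖j + d‖ ≤ 1
    · rw [if_pos h1] at h
      have hd : d = 0 := by
        have h' : (-2 : ℝ) • d = 0 := by rw [← h]; module
        exact (smul_eq_zero.mp h').resolve_left (by norm_num)
      left
      subst hd
      exact ⟨rfl, by simpa using h1⟩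
    · rw [if_neg h1] at h
      right
      by_cases h2 : ‖j + d‖ < 2
      · rw [if_pos h2] at h
        push Not at h1
        obtain ⟨r, hr⟩ : ∃ r, r = ‖j + d‖ := ⟨_, rfl⟩
        rw [← hr] at h h1 h2
        have hr0 : 0 < r := by linarith
        have hd : d = (r - 1) • j := by
          -- The factor `r / 2` clears the denominator and normalises the coefficient of `d` to `-1`.
          have e : (r / 2) • (j - d - ((2 - r) / r) • (j + d)) = (r - 1) • j - d := by
            match_scalars <;> field_simp <;> ring
          rw [h, smul_zero] at e
          exact (sub_eq_zero.mp e.symm).symm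
        have hj : ‖j‖ = 1 := by
          have e : j + d = r • j := by rw [hd]; module
          rw [e, norm_smul, Real.norm_of_nonneg hr0.le] at hr
          exact mul_left_cancel₀ hr0.ne' (by linarith)
        have hnd : ‖d‖ = r - 1 := by
          rw [hd, norm_smul, hj, Real.norm_of_nonneg (by linarith), mul_one]
        have hr1 : 0 < r - 1 := by linarith
        refine ⟨norm_pos_iff.mp (by rw [hnd]; exact hr1), ?_⟩
        rw [hnd, max_eq_right ((one_le_inv₀ hr1).mpr (by linarith)), hd, smul_smul,
          inv_mul_cancel₀ hr1.ne', one_smul]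
      · rw [if_neg h2, zero_smul, sub_zero] at h
        have hjd : j = d := sub_eq_zero.mp h
        subst hjd
        have e : ‖j + j‖ = 2 * ‖j‖ := by
          rw [← two_smul ℝ j, norm_smul, Real.norm_of_nonneg (by norm_num)]
        have hj : 1 ≤ ‖j‖ := by linarith
        refine ⟨norm_pos_iff.mp (by linarith), ?_⟩
        rw [max_eq_left (inv_le_one_of_one_le₀ hj), one_smul]
  · rintro (⟨rfl, hj⟩ | ⟨hd, hj⟩)
    · simp [hj]
    · have hd0 : 0 < ‖d‖ := norm_pos_iff.mpr hd
      rcases le_or_gt 1 ‖d‖ with h1 | h1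
      · rw [max_eq_left (inv_le_one_of_one_le₀ h1), one_smul] at hj
        subst hj
        have e : ‖j + j‖ = 2 * ‖j‖ := by
          rw [← two_smul ℝ j, norm_smul, Real.norm_of_nonneg (by norm_num)]
        rw [if_neg (by linarith), if_neg (by linarith)]
        simp
      · rw [max_eq_right ((one_le_inv₀ hd0).mpr h1.le)] at hj
        have e : ‖j + d‖ = 1 + ‖d‖ := by
          have e' : j + d = (‖d‖⁻¹ + 1) • d := by rw [hj]; module
          rw [e', norm_smul, Real.norm_of_nonneg (by positivity)]
          field_simp
        rw [if_neg (by linarith), if_pos (by linarith), e, hj]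
        match_scalars
        field_simp
        ring
end

section
/- Define a : [0,∞) → [0,1] by a(x) = 1 for x ∈ [0, √2/2], a(x) = (√2 − x)/x for x ∈ (√2/2, √2), and a(x) = 0 for x ≥ √2, and define g : ℝ^d × ℝ^d → ℝ^d by g(j,d) := j − d − a(√2·|j+d|/2)·(j+d). Then there exists a constant C > 0 such that every (j,d) ∈ ℝ^d × ℝ^d with g(j,d) = 0 satisfies 2 j·d ≥ |j|² + |d|² − C; moreover, if |j+d| ≥ 2 then 2 j·d ≥ |j|² + |d|². (This is the 2-coercivity condition (g4) with p = 2 for the null set of g.) -/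
/-!
On the null set of `g` one has `j - d = a • (j + d)` with `a = aFun (√2 ‖j + d‖ / 2)`, hence
`‖j‖² + ‖d‖² - 2⟪j, d⟫ = ‖j - d‖² = a² ‖j + d‖²`. If `‖j + d‖ ≥ 2` the argument of `aFun` is at
least `√2`, so `a = 0` and the right-hand side vanishes. Otherwise `0 ≤ a ≤ 1` bounds it by `4`,
so `C = 4` works.
-/

open scoped RealInnerProductSpace

theorem aFun_nonneg (x : ℝ) : 0 ≤ aFun x := by
  have h2 : 0 < Real.sqrt 2 := by positivity
  unfold aFun
  split_ifs with h h'
  · exact zero_le_one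
  · exact div_nonneg (by linarith) (by linarith)
  · exact le_rfl

theorem aFun_le_one (x : ℝ) : aFun x ≤ 1 := by
  have h2 : 0 < Real.sqrt 2 := by positivity
  unfold aFun
  split_ifs with h h'
  · exact le_rfl
  · rw [div_le_one (by linarith)]
    linarith
  · exact zero_le_one

theorem aFun_eq_zero {x : ℝ} (hx : Real.sqrt 2 ≤ x) : aFun x = 0 := by
  have h2 : 0 < Real.sqrt 2 := by positivity
  unfold aFun
  rw [if_neg (by linarith), if_neg (by linarith)]

/-- with g(j,d) := j − d − a(√2·|j+d|/2)·(j+d), there is C > 0 such that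
every (j,d) with g(j,d) = 0 satisfies 2 j·d ≥ |j|² + |d|² − C; moreover, if |j+d| ≥ 2
then 2 j·d ≥ |j|² + |d|² (the 2-coercivity condition (g4) with p = 2). -/
theorem step_graph_coercivity {n : ℕ} (hn : 1 ≤ n) :
    ∃ C : ℝ, 0 < C ∧
      ∀ j d : EuclideanSpace ℝ (Fin n),
        j - d - aFun (Real.sqrt 2 * ‖j + d‖ / 2) • (j + d) = 0 →
          (‖j‖ ^ 2 + ‖d‖ ^ 2 - C ≤ 2 * ⟪j, d⟫ ∧
           (2 ≤ ‖j + d‖ → ‖j‖ ^ 2 + ‖d‖ ^ 2 ≤ 2 * ⟪j, d⟫)) := by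
  refine ⟨4, by norm_num, fun j d h => ?_⟩
  have h2 : 0 < Real.sqrt 2 := by positivity
  have ha0 := aFun_nonneg (Real.sqrt 2 * ‖j + d‖ / 2)
  have ha1 := aFun_le_one (Real.sqrt 2 * ‖j + d‖ / 2)
  have hnorm : ‖j - d‖ = aFun (Real.sqrt 2 * ‖j + d‖ / 2) * ‖j + d‖ := by
    rw [sub_eq_zero.mp h, norm_smul, Real.norm_of_nonneg ha0]
  have hexp := norm_sub_sq_real j d
  have hlarge : 2 ≤ ‖j + d‖ → ‖j‖ ^ 2 + ‖d‖ ^ 2 ≤ 2 * ⟪j, d⟫ := by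
    intro hs
    rw [aFun_eq_zero (by nlinarith), zero_mul] at hnorm
    rw [hnorm] at hexp
    linarith
  refine ⟨?_, hlarge⟩
  rcases le_or_gt 2 ‖j + d‖ with hs | hs
  · linarith [hlarge hs]
  · have hle : ‖j - d‖ ≤ 2 := by
      rw [hnorm]
      exact (mul_le_of_le_one_left (norm_nonneg _) ha1).trans hs.le
    nlinarith [norm_nonneg (j - d)]
end
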